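/- arXiv:0705.2686 — 8 statements merged into one kernel-verified Lean document; each statement's English description precedes it below -/
import Mathlib

section
/- Let M be a module over 𝒪_ℱ, let x ∈ M, and let 0 ≤ s ≤ r. If x vanishes at every subtorus of G of dimension greater than s, then the set of subtori of G of dimension exactly s at which x does not vanish is finite. -/
open scoped Classical

noncomputable section

/-- The `r`-torus `G = (ℝ/ℤ)^r`. -/
abbrev Torus (r : ℕ) : Type := Fin r → AddCircle (1 : ℝ)

/-- The character `χ_α : G → ℝ/ℤ` associated to `α ∈ ℤ^r` is trivial on the subgroup `H`. -/
def IsTrivialOn {r : ℕ} (α : Fin r → ℤ) (H : AddSubgroup (Torus r)) : Prop :=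
  ∀ x ∈ H, (∑ i, α i • x i) = (0 : AddCircle (1 : ℝ))

/-- The subgroup of `ℤ^r` consisting of characters trivial on `H`. -/
def trivialChars {r : ℕ} (H : AddSubgroup (Torus r)) : AddSubgroup (Fin r → ℤ) where
  carrier := {α | IsTrivialOn α H}
  zero_mem' := by
    intro x _
    simp
  add_mem' := by
    intro α β hα hβ x hx
    have := hα x hx
    have := hβ x hx
    simp only [Pi.add_apply, add_zsmul]
    rw [Finset.sum_add_distrib]
    simp_all
  neg_mem' := by
    intro α hα x hx
    have := hα x hx
    simp only [Pi.neg_apply, neg_zsmul]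
    rw [Finset.sum_neg_distrib]
    simp_all

/-- A subtorus of `G`: a closed connected subgroup. -/
structure Subtorus (r : ℕ) where
  toAddSubgroup : AddSubgroup (Torus r)
  isClosed' : IsClosed (toAddSubgroup : Set (Torus r))
  isConnected' : IsConnected (toAddSubgroup : Set (Torus r))

/-- The dimension of a subtorus: `r` minus the rank of the group of characters trivial on it. -/
def Subtorus.dim {r : ℕ} (K : Subtorus r) : ℕ :=
  r - Module.finrank ℤ (AddSubgroup.toIntSubmodule (trivialChars K.toAddSubgroup))

/-- The set `ℱ` of finite subgroups of the torus, as a type. -/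
def FinSub (r : ℕ) : Type := {F : AddSubgroup (Torus r) // (F : Set (Torus r)).Finite}

/-- The ring `𝒪_ℱ = ∏_{F ∈ ℱ} H^*(BG/F; ℚ) = ∏_{F ∈ ℱ} ℚ[x₁,…,x_r]`. -/
abbrev OcalF (r : ℕ) : Type := FinSub r → MvPolynomial (Fin r) ℚ

/-- The linear form `α₁x₁ + ⋯ + α_r x_r` associated to a character `α`. -/
def lform {r : ℕ} (α : Fin r → ℤ) : MvPolynomial (Fin r) ℚ :=
  ∑ i, MvPolynomial.C (α i : ℚ) * MvPolynomial.X i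

/-- The Euler class `e(α) ∈ 𝒪_ℱ` of a character `α`. -/
def euler {r : ℕ} (α : Fin r → ℤ) : OcalF r :=
  fun F => if IsTrivialOn α F.1 then lform α else 1

/-- The idempotent `e_F ∈ 𝒪_ℱ` supported at the finite subgroup `F`. -/
def idemF {r : ℕ} (F : FinSub r) : OcalF r :=
  fun F' => if F' = F then 1 else 0

/-- An element `x` of an `𝒪_ℱ`-module `M` vanishes at the subtorus `K` if it is killed by
a product of Euler classes of characters each nontrivial on `K`. -/
def VanishesAt {r : ℕ} {M : Type*} [AddCommGroup M] [Module (OcalF r) M]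
    (x : M) (K : Subtorus r) : Prop :=
  ∃ (n : ℕ) (αs : Fin n → (Fin r → ℤ)),
    (∀ i, ¬ IsTrivialOn (αs i) K.toAddSubgroup) ∧ (∏ i, euler (αs i)) • x = 0

end

/-!
By Pontryagin duality a subtorus `K` is determined by its annihilator, the lattice of characters
trivial on `K`, and the annihilators are exactly the subgroups `A ≤ ℤ^r` with `ℤ^r ⧸ A`
torsion-free. Noetherian induction on `A`, from the top, shows that only finitely many subtori of
dimension `s` at which `x` does not vanish have annihilator containing `A`. If `ℤ^r ⧸ A` has
torsion, any annihilator containing `A` also contains a fixed character outside `A`.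
If `A` is the annihilator of a subtorus of dimension `> s`, then `x` is killed by a product
`e(α₁)⋯e(α_n)` with no `αᵢ` in `A`; were all `αᵢ` nontrivial on `K`, then `x` would vanish at `K`,
so the annihilator of `K` contains some `A + ℤαᵢ`. If the dimension is `≤ s`, comparing ranks
leaves at most one `K`.
-/

section NoetherianInduction

theorem finite_of_forall_finite_or_exists_transversal {R V : Type*} [Semiring R]
    [AddCommMonoid V] [Module R V] [IsNoetherian R V] {T : Set (Submodule R V)}
    (hT : ∀ A, {B ∈ T | A ≤ B}.Finite ∨ ∃ S : Set V, S.Finite ∧ Disjoint S (A : Set V) ∧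
      ∀ B ∈ T, A ≤ B → (S ∩ B).Nonempty) : T.Finite := by
  suffices h : ∀ A, {B ∈ T | A ≤ B}.Finite by simpa using h ⊥
  intro A
  induction A using WellFoundedGT.induction with
  | ind A ih =>
    rcases hT A with hfin | ⟨S, hS, hSA, hST⟩
    · exact hfin
    · have hlt (v) (hv : v ∈ S) : A < A ⊔ Submodule.span R {v} := by
        simpa [left_lt_sup] using Set.disjoint_left.mp hSA hv
      refine (hS.biUnion fun v hv => ih _ (hlt v hv)).subset fun B ⟨hBT, hAB⟩ => ?_
      obtain ⟨v, hvS, hvB⟩ := hST B hBT hAB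
      exact Set.mem_iUnion₂.mpr ⟨v, hvS, hBT, sup_le hAB (by simpa using hvB)⟩

end NoetherianInduction

section TorsionFreeQuotient

variable {R V : Type*} [CommRing R] [IsDomain R] [AddCommGroup V] [Module R V]
  {A B : Submodule R V}

theorem isTorsionFree_quotient_iff :
    Module.IsTorsionFree R (V ⧸ A) ↔ ∀ (c : R) (v : V), c • v ∈ A → c = 0 ∨ v ∈ A := by
  rw [Module.isTorsionFree_iff_smul_eq_zero]
  simp only [A.mkQ_surjective.forall, Submodule.mkQ_apply, ← Submodule.Quotient.mk_smul,
    Submodule.Quotient.mk_eq_zero]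

theorem eq_of_le_of_finrank_le_of_isTorsionFree_quotient [Module.Finite R B]
    [Module.IsTorsionFree R (V ⧸ A)] (hAB : A ≤ B)
    (hrank : Module.finrank R B ≤ Module.finrank R A) : A = B := by
  have hquot : Module.finrank R (B ⧸ A.submoduleOf B) = 0 := by
    have := (A.submoduleOf B).finrank_quotient_add_finrank
    rw [(Submodule.submoduleOfEquivOfLe hAB).finrank_eq] at this
    omega
  refine le_antisymm hAB fun b hb => ?_
  obtain ⟨c, hc, hcb⟩ :=
    Module.finrank_eq_zero_iff.mp hquot (Submodule.Quotient.mk ⟨b, hb⟩)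
  rw [← Submodule.Quotient.mk_smul, Submodule.Quotient.mk_eq_zero] at hcb
  exact (isTorsionFree_quotient_iff.mp ‹_› c b hcb).resolve_left hc

theorem finite_of_forall_isTorsionFree_quotient [IsNoetherian R V] {T : Set (Submodule R V)}
    (hT : ∀ B ∈ T, Module.IsTorsionFree R (V ⧸ B))
    (h : ∀ A : Submodule R V, Module.IsTorsionFree R (V ⧸ A) → {B ∈ T | A ≤ B}.Finite ∨
      ∃ S : Set V, S.Finite ∧ Disjoint S (A : Set V) ∧ ∀ B ∈ T, A ≤ B → (S ∩ B).Nonempty) :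
    T.Finite := by
  refine finite_of_forall_finite_or_exists_transversal fun A => ?_
  by_cases hA : Module.IsTorsionFree R (V ⧸ A)
  · exact h A hA
  · obtain ⟨c, v, hcv, hc, hv⟩ : ∃ (c : R) (v : V), c • v ∈ A ∧ c ≠ 0 ∧ v ∉ A := by
      simpa [isTorsionFree_quotient_iff] using hA
    refine .inr ⟨{v}, Set.finite_singleton v, Set.disjoint_singleton_left.mpr hv, ?_⟩
    intro B hB hAB
    have hvB := (isTorsionFree_quotient_iff.mp (hT B hB) c v (hAB hcv)).resolve_left hc
    exact ⟨v, rfl, hvB⟩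

theorem exists_ker_eq_of_isTorsionFree_quotient [IsPrincipalIdealRing R] [Module.Finite R V]
    (A : Submodule R V) [Module.IsTorsionFree R (V ⧸ A)] :
    ∃ (m : ℕ) (P : V →ₗ[R] (Fin m → R)), LinearMap.ker P = A := by
  let b := Module.finBasis R (V ⧸ A)
  exact ⟨_, b.equivFun.toLinearMap ∘ₗ A.mkQ, by simp [LinearEquiv.ker_comp]⟩

end TorsionFreeQuotient

section Fourier

open MeasureTheory UnitAddTorus

theorem integral_eq_zero_of_add_left_eq_smul {G 𝕜 E : Type*} [AddGroup G] [MeasurableSpace G]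
    [MeasurableAdd G] {μ : Measure G} [μ.IsAddLeftInvariant] [RCLike 𝕜] [NormedAddCommGroup E]
    [NormedSpace ℝ E] [NormedSpace 𝕜 E] {f : G → E} {c : 𝕜} {g : G}
    (hf : ∀ x, f (g + x) = c • f x) (hc : c ≠ 1) : ∫ x, f x ∂μ = 0 := by
  have h : c • ∫ x, f x ∂μ = ∫ x, f x ∂μ := by
    rw [← integral_smul, ← integral_add_left_eq_self f g]
    simp only [hf]
  have h' : (c - 1) • ∫ x, f x ∂μ = 0 := by rw [sub_smul, one_smul, h, sub_self]
  exact (smul_eq_zero.mp h').resolve_left (sub_ne_zero.mpr hc)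

variable {d : Type*} [Fintype d]

theorem ext_of_forall_integral_mFourier_eq {μ ν : Measure (UnitAddTorus d)} [IsFiniteMeasure μ]
    [IsFiniteMeasure ν] (h : ∀ n, ∫ x, mFourier n x ∂μ = ∫ x, mFourier n x ∂ν) : μ = ν := by
  let π := BoundedContinuousFunction.toContinuousMapStarₐ (α := UnitAddTorus d) (β := ℂ) ℂ
  have integrable (ρ : Measure (UnitAddTorus d)) [IsFiniteMeasure ρ] (f : C(UnitAddTorus d, ℂ)) :
      Integrable f ρ := (BoundedContinuousFunction.mkOfCompact f).integrable ρ
  refine ext_of_forall_mem_subalgebra_integral_eq_of_pseudoEMetric_complete_countable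
    (A := (mFourierSubalgebra d).comap π) ?_ fun f hf => ?_
  · intro x y hxy
    obtain ⟨_, ⟨g, hg, rfl⟩, hgxy⟩ := mFourierSubalgebra_separatesPoints hxy
    exact ⟨_, ⟨g, ⟨.mkOfCompact g, hg, rfl⟩, rfl⟩, hgxy⟩
  · have hspan : π f ∈ Submodule.span ℂ (Set.range mFourier) := by
      rw [← mFourierSubalgebra_coe]
      exact hf
    change ∫ x, π f x ∂μ = ∫ x, π f x ∂ν
    generalize π f = g at hspan
    induction hspan using Submodule.span_induction with
    | mem f hf => obtain ⟨n, rfl⟩ := hf; exact h n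
    | zero => simp
    | add f g _ _ hf hg =>
      simp only [ContinuousMap.add_apply]
      rw [integral_add (integrable μ f) (integrable μ g),
        integral_add (integrable ν f) (integrable ν g), hf, hg]
    | smul c f _ hf => simp only [ContinuousMap.smul_apply, integral_smul, hf]

theorem mFourier_apply_eq_toCircle (n : d → ℤ) (x : UnitAddTorus d) :
    mFourier n x = (∑ i, n i • x i).toCircle := by
  simp only [mFourier, ContinuousMap.coe_mk, fourier_apply]
  exact (map_prod (Circle.coeHom.comp AddCircle.toCircle_addChar.toMonoidHom)
    (fun i => Multiplicative.ofAdd (n i • x i)) Finset.univ).symm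

theorem mFourier_apply_add (n : d → ℤ) (x y : UnitAddTorus d) :
    mFourier n (x + y) = mFourier n x * mFourier n y := by
  simp only [mFourier_apply_eq_toCircle, Pi.add_apply, smul_add, Finset.sum_add_distrib,
    AddCircle.toCircle_add, Circle.coe_mul]

theorem mFourier_apply_eq_one_iff (n : d → ℤ) (x : UnitAddTorus d) :
    mFourier n x = 1 ↔ ∑ i, n i • x i = 0 := by
  rw [mFourier_apply_eq_toCircle, Circle.coe_eq_one, ← AddCircle.toCircle_zero,
    (AddCircle.injective_toCircle one_ne_zero).eq_iff]

end Fourier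

section TorusDuality

open MeasureTheory UnitAddTorus

variable {r : ℕ} {H : AddSubgroup (Torus r)}

/- The Haar measure of `H` and its translate by `y` have the same Fourier coefficients, hence agree;
but the translate is supported on `y + H`, which is disjoint from `H` unless `y ∈ H`. -/
theorem mem_of_forall_mem_trivialChars (hH : IsClosed (H : Set (Torus r))) {y : Torus r}
    (hy : ∀ α ∈ trivialChars H, ∑ i, α i • y i = 0) : y ∈ H := by
  by_contra hyH
  have : CompactSpace H := isCompact_iff_compactSpace.mp hH.isCompact
  let ν : Measure H := Measure.addHaarMeasure ⊤
  have : IsProbabilityMeasure ν := ⟨Measure.addHaarMeasure_self⟩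
  have hcoe : Measurable fun k : H => (k : Torus r) := measurable_subtype_coe
  have htrans : Measurable fun k : H => y + (k : Torus r) := hcoe.const_add y
  have hmap : ν.map (fun k : H => y + (k : Torus r)) = ν.map (fun k : H => (k : Torus r)) := by
    refine ext_of_forall_integral_mFourier_eq fun α => ?_
    rw [integral_map htrans.aemeasurable (by fun_prop),
      integral_map hcoe.aemeasurable (by fun_prop)]
    simp only [mFourier_apply_add, integral_const_mul]
    by_cases hα : IsTrivialOn α H
    · rw [(mFourier_apply_eq_one_iff α y).mpr (hy α hα), one_mul]
    · obtain ⟨k, hk, hαk⟩ : ∃ k ∈ H, ∑ i, α i • k i ≠ 0 := by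
        simpa only [IsTrivialOn, not_forall, exists_prop] using hα
      have hzero : ∫ h : H, mFourier α (h : Torus r) ∂ν = 0 :=
        integral_eq_zero_of_add_left_eq_smul (g := ⟨k, hk⟩)
          (fun h => mFourier_apply_add α k h) (mt (mFourier_apply_eq_one_iff α k).mp hαk)
      rw [hzero, mul_zero]
  have hH_mass : ν.map (fun k : H => (k : Torus r)) H = 1 := by
    rw [Measure.map_apply hcoe hH.measurableSet,
      Set.eq_univ_of_forall (s := (fun k : H => (k : Torus r)) ⁻¹' H) fun k => k.2, measure_univ]
  have hH_translate : ν.map (fun k : H => y + (k : Torus r)) H = 0 := by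
    rw [Measure.map_apply htrans hH.measurableSet]
    simp [Set.preimage, AddSubgroup.add_mem_cancel_right, hyH]
  exact zero_ne_one (hH_translate.symm.trans (hmap ▸ hH_mass))

theorem eq_zero_or_mem_trivialChars_of_smul_mem (hH : IsPreconnected (H : Set (Torus r))) {n : ℤ}
    {α : Fin r → ℤ} (h : n • α ∈ trivialChars H) : n = 0 ∨ α ∈ trivialChars H := by
  refine or_iff_not_imp_left.mpr fun hn y hy => ?_
  let χ : Torus r → AddCircle (1 : ℝ) := fun z => ∑ i, α i • z i
  have himage : (χ '' H).Finite := by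
    refine (AddCircle.finite_torsion_of_isSMulRegular_int 1 n (.of_ne_zero hn)).subset ?_
    rintro _ ⟨z, hz, rfl⟩
    simpa [χ, Finset.smul_sum, mul_smul] using h z hz
  have hχ : Continuous χ := by fun_prop
  have hconst : (χ '' H).Subsingleton := by
    contrapose! himage
    exact (hH.image χ hχ.continuousOn).infinite_of_nontrivial himage
  simpa [χ] using hconst (Set.mem_image_of_mem χ hy) (Set.mem_image_of_mem χ H.zero_mem)

theorem eq_zero_of_forall_zsmul_addCircle_eq_zero {p : ℝ} [Fact (0 < p)] {n : ℤ}
    (h : ∀ u : AddCircle p, n • u = 0) : n = 0 := by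
  have hdvd := addOrderOf_dvd_iff_zsmul_eq_zero.mpr (h (p / (n.natAbs + 1 : ℕ) : ℝ))
  rw [AddCircle.addOrderOf_period_div n.natAbs.succ_pos] at hdvd
  exact Int.eq_zero_of_dvd_of_natAbs_lt_natAbs hdvd (by rw [Int.natAbs_natCast]; omega)

theorem eq_zero_of_isTrivialOn_top {α : Fin r → ℤ} (h : IsTrivialOn α ⊤) : α = 0 := by
  funext j
  refine eq_zero_of_forall_zsmul_addCircle_eq_zero (p := 1) fun u => ?_
  have hj := h (Pi.single j u) trivial
  rwa [Finset.sum_eq_single j (fun i _ hij => by simp [hij]) (by simp), Pi.single_eq_same] at hj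

/-- The homomorphism of tori Pontryagin dual to a homomorphism `P` of character lattices: it
pulls the character `α` back to `P α`. -/
def dualTorusHom {m : ℕ} (P : (Fin r → ℤ) →ₗ[ℤ] (Fin m → ℤ)) : Torus m →ₜ+ Torus r where
  toFun y i := ∑ j, P (Pi.single i 1) j • y j
  map_zero' := by ext; simp
  map_add' y z := by ext; simp [Finset.sum_add_distrib]
  continuous_toFun := by fun_prop

theorem dualTorusHom_apply {m : ℕ} (P : (Fin r → ℤ) →ₗ[ℤ] (Fin m → ℤ)) (y : Torus m)
    (i : Fin r) : dualTorusHom P y i = ∑ j, P (Pi.single i 1) j • y j := rfl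

theorem sum_zsmul_dualTorusHom {m : ℕ} (P : (Fin r → ℤ) →ₗ[ℤ] (Fin m → ℤ)) (α : Fin r → ℤ)
    (y : Torus m) : ∑ i, α i • dualTorusHom P y i = ∑ j, P α j • y j := by
  have h : Fintype.linearCombination ℤ (dualTorusHom P y) = Fintype.linearCombination ℤ y ∘ₗ P := by
    ext i
    simp [dualTorusHom_apply, Fintype.linearCombination_apply]
  exact LinearMap.congr_fun h α

theorem isTrivialOn_range_dualTorusHom {m : ℕ} {P : (Fin r → ℤ) →ₗ[ℤ] (Fin m → ℤ)}
    {α : Fin r → ℤ} :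
    IsTrivialOn α (dualTorusHom P).toAddMonoidHom.range ↔ P α = 0 := by
  refine ⟨fun h => eq_zero_of_isTrivialOn_top fun y _ => ?_, ?_⟩
  · exact (sum_zsmul_dualTorusHom P α y).symm.trans (h _ ⟨y, rfl⟩)
  · rintro h _ ⟨y, rfl⟩
    refine (sum_zsmul_dualTorusHom P α y).trans ?_
    simp [h]

namespace Subtorus

/-- The image of a homomorphism of tori. -/
def range {m : ℕ} (f : Torus m →ₜ+ Torus r) : Subtorus r where
  toAddSubgroup := f.toAddMonoidHom.range
  isClosed' := (isCompact_range f.continuous_toFun).isClosed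
  isConnected' := isConnected_range f.continuous_toFun

/-- The annihilator of a subtorus under Pontryagin duality: the lattice of characters trivial on
it, as a `ℤ`-submodule. -/
def annihilator (K : Subtorus r) : Submodule ℤ (Fin r → ℤ) :=
  AddSubgroup.toIntSubmodule (trivialChars K.toAddSubgroup)

theorem annihilator_injective : Function.Injective (annihilator (r := r)) := by
  intro K L h
  have hle {K L : Subtorus r} (h : L.annihilator ≤ K.annihilator) :
      K.toAddSubgroup ≤ L.toAddSubgroup := fun y hy =>
    mem_of_forall_mem_trivialChars L.isClosed' fun α hα => h hα y hy
  have hKL : K.toAddSubgroup = L.toAddSubgroup := le_antisymm (hle h.ge) (hle h.le)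
  cases K
  congr

instance isTorsionFree_quotient_annihilator (K : Subtorus r) :
    Module.IsTorsionFree ℤ ((Fin r → ℤ) ⧸ K.annihilator) :=
  isTorsionFree_quotient_iff.mpr fun _ _ =>
    eq_zero_or_mem_trivialChars_of_smul_mem K.isConnected'.isPreconnected

theorem exists_annihilator_eq (A : Submodule ℤ (Fin r → ℤ))
    [Module.IsTorsionFree ℤ ((Fin r → ℤ) ⧸ A)] : ∃ K : Subtorus r, K.annihilator = A := by
  obtain ⟨m, P, rfl⟩ := exists_ker_eq_of_isTorsionFree_quotient A
  exact ⟨range (dualTorusHom P), Submodule.ext fun _ => isTrivialOn_range_dualTorusHom⟩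

theorem dim_add_finrank_annihilator (K : Subtorus r) :
    K.dim + Module.finrank ℤ K.annihilator = r :=
  Nat.sub_add_cancel (K.annihilator.finrank_le.trans (by simp))

theorem eq_of_annihilator_le_of_dim_le {H K : Subtorus r} (hle : H.annihilator ≤ K.annihilator)
    (hdim : H.dim ≤ K.dim) : H = K := by
  refine annihilator_injective (eq_of_le_of_finrank_le_of_isTorsionFree_quotient hle ?_)
  have := H.dim_add_finrank_annihilator
  have := K.dim_add_finrank_annihilator
  omega

end Subtorus

end TorusDuality

/-- The analogue of `VanishesAt` for an arbitrary family `e` of scalars indexed by the characters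
in place of the Euler classes. -/
def VanishesAtFor {r : ℕ} {R M : Type*} [CommMonoid R] [SMul R M] [Zero M]
    (e : (Fin r → ℤ) → R) (x : M) (K : Subtorus r) : Prop :=
  ∃ (n : ℕ) (αs : Fin n → (Fin r → ℤ)),
    (∀ i, ¬ IsTrivialOn (αs i) K.toAddSubgroup) ∧ (∏ i, e (αs i)) • x = 0

theorem finiteness_of_support_in_dimension_s_general {r s : ℕ} {R M : Type*} [CommMonoid R]
    [SMul R M] [Zero M] (e : (Fin r → ℤ) → R) (x : M)
    (hvan : ∀ K : Subtorus r, s < K.dim → VanishesAtFor e x K) :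
    {K : Subtorus r | K.dim = s ∧ ¬ VanishesAtFor e x K}.Finite := by
  refine .of_finite_image (f := Subtorus.annihilator) ?_ Subtorus.annihilator_injective.injOn
  refine finite_of_forall_isTorsionFree_quotient
    (Set.forall_mem_image.mpr fun K _ => K.isTorsionFree_quotient_annihilator) fun A _ => ?_
  obtain ⟨H, rfl⟩ := Subtorus.exists_annihilator_eq A
  rcases lt_or_ge s H.dim with hH | hH
  · obtain ⟨n, αs, hαs, hx⟩ := hvan H hH
    refine .inr ⟨Set.range αs, Set.finite_range αs, ?_, ?_⟩
    · exact Set.disjoint_left.mpr (Set.forall_mem_range.mpr hαs)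
    · rintro _ ⟨K, ⟨-, hK⟩, rfl⟩ -
      by_contra hdisj
      exact hK ⟨n, αs, fun i hi => hdisj ⟨αs i, Set.mem_range_self i, hi⟩, hx⟩
  · refine .inl ((Set.finite_singleton H.annihilator).subset ?_)
    rintro _ ⟨⟨K, ⟨hKs, -⟩, rfl⟩, hHK⟩
    rw [Subtorus.eq_of_annihilator_le_of_dim_le hHK (hKs ▸ hH)]
    rfl

/-- Let `M` be a module over `𝒪_ℱ`, `x ∈ M`, and `0 ≤ s ≤ r`.  If `x` vanishes
at every subtorus of `G` of dimension greater than `s`, then the set of subtori of dimension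
exactly `s` at which `x` does not vanish is finite. -/
theorem finiteness_of_support_in_dimension_s
    (r s : ℕ) (hs : s ≤ r)
    (M : Type) [AddCommGroup M] [Module (OcalF r) M] (x : M)
    (hvan : ∀ K : Subtorus r, s < K.dim → VanishesAt x K) :
    {K : Subtorus r | K.dim = s ∧ ¬ VanishesAt x K}.Finite := by
  exact finiteness_of_support_in_dimension_s_general euler x hvan
end

section
/- Let M be a module over 𝒪_ℱ and let x ∈ M. If x vanishes at every one-dimensional subtorus of G, then the set {F ∈ ℱ : e_F·x ≠ 0} is finite. -/
open scoped Classical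

/-!
If `e_F x ≠ 0` and `e(α₁)⋯e(α_n) x = 0`, then some `α_i` is trivial on `F`, because
`e_F e(α) = e_F` for `α` nontrivial on `F`. Use this to build a finitely branching tree of lattices
`L ≤ ℤ^r` of characters trivial on `F`. If `L` has infinite index, it is orthogonal to some `v ≠ 0`,
and vanishing of `x` at the circle `{(v₁y, …, v_r y)}` gives finitely many characters outside `L`,
at least one of them trivial on `F`; adjoining one of these to `L` is a branch. Since `ℤ^r` is
Noetherian, the tree is finite. At a leaf `L` has finite index `n`, so every `F` annihilated by `L`
lies in the finite group of `n`-torsion points of `G`.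
-/

/-- A form of König's lemma: the vertices of the tree are elements `a : P`, each carrying the
indices `i` with `a ≤ f i`; a vertex that is not a leaf has the elements of `t` as children. -/
theorem finite_of_forall_finite_or_finite_cover {ι P : Type*} [Preorder P] [OrderBot P]
    [WellFoundedGT P] {s : Set ι} {f : ι → P}
    (h : ∀ a, {i ∈ s | a ≤ f i}.Finite ∨
      ∃ t ⊆ Set.Ioi a, t.Finite ∧ ∀ i ∈ s, a ≤ f i → ∃ b ∈ t, b ≤ f i) :
    s.Finite := by
  suffices ∀ a, {i ∈ s | a ≤ f i}.Finite by simpa using this ⊥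
  intro a
  induction a using WellFoundedGT.induction with
  | ind a ih =>
    obtain hfin | ⟨t, hta, ht, hcover⟩ := h a
    · exact hfin
    · refine (ht.biUnion fun b hb => ih b (hta hb)).subset fun i ⟨his, hai⟩ => ?_
      obtain ⟨b, hb, hbi⟩ := hcover i his hai
      exact Set.mem_biUnion hb ⟨his, hbi⟩

theorem finrank_ker_add_one_of_ne_zero {R V : Type*} [CommRing R] [IsDomain R] [AddCommGroup V]
    [Module R V] [Module.Finite R V] {f : V →ₗ[R] R} (hf : f ≠ 0) :
    Module.finrank R (LinearMap.ker f) + 1 = Module.finrank R V := by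
  have hrange : Module.finrank R (LinearMap.range f) = 1 :=
    le_antisymm ((Submodule.finrank_le _).trans_eq (Module.finrank_self R))
      (Submodule.one_le_finrank_iff.2 (LinearMap.range_eq_bot.not.2 hf))
  rw [← Submodule.finrank_quotient_add_finrank (LinearMap.ker f),
    f.quotKerEquivRange.finrank_eq, hrange, add_comm]

theorem exists_ne_zero_forall_dotProduct_eq_zero_of_finrank_lt {R n : Type*} [CommRing R]
    [Nontrivial R] [Fintype n] {L : Submodule R (n → R)} [Module.Free R L] [Module.Finite R L]
    (hL : Module.finrank R L < Fintype.card n) :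
    ∃ v ≠ 0, ∀ α ∈ L, v ⬝ᵥ α = 0 := by
  let f : (n → R) →ₗ[R] Module.Dual R L := (dotProductBilin R R).domRestrict₂ L
  have hf : ¬ Function.Injective f := fun hinj => hL.not_ge <| by
    simpa only [Module.finrank_fintype_fun_eq_card, Module.finrank_linearMap_self]
      using LinearMap.finrank_le_finrank_of_injective hinj
  rw [injective_iff_map_eq_zero] at hf
  push Not at hf
  obtain ⟨v, hv, hv0⟩ := hf
  exact ⟨v, hv0, fun α hα => LinearMap.congr_fun hv ⟨α, hα⟩⟩

theorem exists_ne_zero_forall_dotProduct_eq_zero_of_infinite_quotient {n : Type*} [Fintype n]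
    (L : Submodule ℤ (n → ℤ)) [Infinite ((n → ℤ) ⧸ L)] :
    ∃ v ≠ 0, ∀ α ∈ L, v ⬝ᵥ α = 0 := by
  refine exists_ne_zero_forall_dotProduct_eq_zero_of_finrank_lt ?_
  rw [← Module.finrank_fintype_fun_eq_card ℤ]
  refine (Submodule.finrank_le L).lt_of_ne fun h => ?_
  exact not_finite_iff_infinite.2 ‹_› (Submodule.finiteQuotientOfFreeOfRankEq L h)

theorem eq_zero_of_forall_zsmul_addCircle_eq_zero_s2 {𝕜 : Type*} [Field 𝕜] [LinearOrder 𝕜]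
    [IsStrictOrderedRing 𝕜] {p : 𝕜} [Fact (0 < p)] {m : ℤ}
    (h : ∀ y : AddCircle p, m • y = 0) : m = 0 := by
  let y : AddCircle p := (p / (m.natAbs + 1 : ℕ) : 𝕜)
  have hy : addOrderOf y = m.natAbs + 1 := AddCircle.addOrderOf_period_div m.natAbs.succ_pos
  have hdvd : ((m.natAbs + 1 : ℕ) : ℤ) ∣ m := hy ▸ addOrderOf_dvd_iff_zsmul_eq_zero.2 (h y)
  exact Int.eq_zero_of_abs_lt_dvd hdvd (by rw [Int.abs_eq_natAbs]; omega)

variable {r : ℕ}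

/-- The cocharacter `ℝ/ℤ → G`, `y ↦ (v₁ y, …, v_r y)` with direction `v ∈ ℤ^r`. -/
def cocharacter (v : Fin r → ℤ) : AddCircle (1 : ℝ) →+ Torus r :=
  AddMonoidHom.pi fun i => zsmulAddGroupHom (v i)

theorem cocharacter_apply (v : Fin r → ℤ) (y : AddCircle (1 : ℝ)) (i : Fin r) :
    cocharacter v y i = v i • y :=
  rfl

theorem continuous_cocharacter (v : Fin r → ℤ) : Continuous (cocharacter v) :=
  continuous_pi fun i => continuous_zsmul (v i)

theorem sum_zsmul_cocharacter (α v : Fin r → ℤ) (y : AddCircle (1 : ℝ)) :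
    ∑ i, α i • cocharacter v y i = (v ⬝ᵥ α) • y := by
  rw [dotProduct_comm]
  simp only [cocharacter_apply, dotProduct, Finset.sum_smul, mul_smul]

/-- The image of a cocharacter, a subtorus of dimension one unless `v = 0`. The vector `v` need not
be primitive. -/
def Subtorus.ofCocharacter (v : Fin r → ℤ) : Subtorus r where
  toAddSubgroup := (cocharacter v).range
  isClosed' := by
    rw [AddMonoidHom.coe_range]
    exact (isCompact_range (continuous_cocharacter v)).isClosed
  isConnected' := by
    rw [AddMonoidHom.coe_range]
    exact isConnected_range (continuous_cocharacter v)

/-- The lattice of characters trivial on `H`: `trivialChars H` as a `ℤ`-submodule, so that the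
module theory of `ℤ^r` applies to it. -/
abbrev annihilator (H : AddSubgroup (Torus r)) : Submodule ℤ (Fin r → ℤ) :=
  AddSubgroup.toIntSubmodule (trivialChars H)

theorem isTrivialOn_ofCocharacter_iff {v α : Fin r → ℤ} :
    IsTrivialOn α (Subtorus.ofCocharacter v).toAddSubgroup ↔ v ⬝ᵥ α = 0 := by
  constructor
  · intro h
    refine eq_zero_of_forall_zsmul_addCircle_eq_zero_s2 (p := (1 : ℝ)) fun y => ?_
    rw [← sum_zsmul_cocharacter]
    exact h _ ⟨y, rfl⟩
  · rintro h _ ⟨y, rfl⟩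
    rw [sum_zsmul_cocharacter, h, zero_smul]

theorem annihilator_ofCocharacter (v : Fin r → ℤ) :
    annihilator (Subtorus.ofCocharacter v).toAddSubgroup =
      LinearMap.ker (dotProductBilin ℤ ℤ v) :=
  Submodule.ext fun _ => isTrivialOn_ofCocharacter_iff

theorem Subtorus.dim_ofCocharacter {v : Fin r → ℤ} (hv : v ≠ 0) : (ofCocharacter v).dim = 1 := by
  have hdot : dotProductBilin ℤ ℤ v ≠ 0 := fun h =>
    hv (dotProduct_self_eq_zero.1 (LinearMap.congr_fun h v))
  have hker := finrank_ker_add_one_of_ne_zero hdot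
  rw [← annihilator_ofCocharacter, Module.finrank_fin_fun] at hker
  exact Nat.sub_eq_of_eq_add' hker.symm

theorem Torus.finite_setOf_nsmul_eq_zero {n : ℕ} (hn : 0 < n) :
    {y : Torus r | n • y = 0}.Finite := by
  refine (Set.Finite.pi' fun _ => AddCircle.finite_torsion 1 hn).subset fun y hy i => ?_
  exact congrFun hy i

theorem nsmul_eq_zero_of_single_mem_annihilator {H : AddSubgroup (Torus r)} {n : ℕ}
    (h : ∀ i, Pi.single i (n : ℤ) ∈ annihilator H) {y : Torus r} (hy : y ∈ H) : n • y = 0 := by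
  ext i
  simpa [Pi.single_apply, ite_smul] using h i y hy

theorem finite_setOf_le_annihilator (L : Submodule ℤ (Fin r → ℤ)) [Finite ((Fin r → ℤ) ⧸ L)] :
    {F : FinSub r | L ≤ annihilator F.1}.Finite := by
  have : Finite ((Fin r → ℤ) ⧸ L.toAddSubgroup) := ‹_›
  set n := L.toAddSubgroup.index
  have hn : 0 < n := Nat.pos_of_ne_zero (AddSubgroup.index_ne_zero_of_finite)
  have hnL (i : Fin r) : Pi.single i (n : ℤ) ∈ L := by
    simpa [← Pi.single_smul'] using L.toAddSubgroup.nsmul_index_mem (Pi.single i 1)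
  refine ((Torus.finite_setOf_nsmul_eq_zero hn).finite_subsets.preimage
    (f := fun F : FinSub r => (F.1 : Set (Torus r))) ?_).subset fun F hF y hy => ?_
  · exact (SetLike.coe_injective.comp Subtype.val_injective).injOn
  · exact nsmul_eq_zero_of_single_mem_annihilator (fun i => hF (hnL i)) hy

theorem idemF_mul_euler {F : FinSub r} {α : Fin r → ℤ} (h : ¬ IsTrivialOn α F.1) :
    idemF F * euler α = idemF F := by
  ext1 F'
  by_cases hF' : F' = F
  · simp [hF', euler, h]
  · simp [idemF, hF']

theorem idemF_mul_prod_euler {ι : Type*} {s : Finset ι} {α : ι → Fin r → ℤ} {F : FinSub r}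
    (h : ∀ i ∈ s, ¬ IsTrivialOn (α i) F.1) : idemF F * ∏ i ∈ s, euler (α i) = idemF F :=
  Finset.prod_induction _ (fun e => idemF F * e = idemF F)
    (fun a b ha hb => by rw [← mul_assoc, ha, hb]) (mul_one _) fun i hi => idemF_mul_euler (h i hi)

theorem exists_isTrivialOn_of_prod_euler_smul_eq_zero {M ι : Type*} [AddCommGroup M]
    [Module (OcalF r) M] {x : M} {s : Finset ι} {α : ι → Fin r → ℤ}
    (hx : (∏ i ∈ s, euler (α i)) • x = 0) {F : FinSub r} (hF : idemF F • x ≠ 0) :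
    ∃ i ∈ s, IsTrivialOn (α i) F.1 := by
  by_contra! h
  rw [← idemF_mul_prod_euler h, mul_smul, hx, smul_zero] at hF
  exact hF rfl

theorem finiteness_of_spread_general {M : Type*} [AddCommGroup M] [Module (OcalF r) M] {x : M}
    (hvan : ∀ v : Fin r → ℤ, v ≠ 0 → VanishesAt x (Subtorus.ofCocharacter v)) :
    {F : FinSub r | idemF F • x ≠ 0}.Finite := by
  refine finite_of_forall_finite_or_finite_cover (f := fun F => annihilator F.1) fun L => ?_
  obtain hL | hL := finite_or_infinite ((Fin r → ℤ) ⧸ L)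
  · exact .inl ((finite_setOf_le_annihilator L).subset fun F hF => hF.2)
  · obtain ⟨v, hv, hvL⟩ := exists_ne_zero_forall_dotProduct_eq_zero_of_infinite_quotient L
    obtain ⟨n, α, hα, hx⟩ := hvan v hv
    have hαL (i : Fin n) : α i ∉ L := fun h => hα i (isTrivialOn_ofCocharacter_iff.2 (hvL _ h))
    refine .inr ⟨Set.range fun i => L ⊔ Submodule.span ℤ {α i}, ?_, Set.finite_range _, ?_⟩
    · rintro _ ⟨i, rfl⟩
      exact left_lt_sup.2 ((Submodule.span_singleton_le_iff_mem _ _).not.2 (hαL i))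
    · intro F hF hLF
      obtain ⟨i, -, hi⟩ := exists_isTrivialOn_of_prod_euler_smul_eq_zero hx hF
      exact ⟨_, ⟨i, rfl⟩, sup_le hLF ((Submodule.span_singleton_le_iff_mem _ _).2 hi)⟩

/-- If `x ∈ M` vanishes at every one-dimensional subtorus of `G`, then the set
`{F ∈ ℱ : e_F · x ≠ 0}` is finite. -/
theorem finiteness_of_spread
    (r : ℕ) (M : Type) [AddCommGroup M] [Module (OcalF r) M] (x : M)
    (hvan : ∀ K : Subtorus r, K.dim = 1 → VanishesAt x K) :
    {F : FinSub r | idemF F • x ≠ 0}.Finite :=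
  finiteness_of_spread_general fun _ hv => hvan _ (Subtorus.dim_ofCocharacter hv)
end

section
/- Suppose that for each i ∈ I, M_i is a faithfully flat R_i-module, regarded as an R-module via the projection R → R_i. If N is a Hausdorff R-module with (∏_{i∈I} M_i) ⊗_R N = 0, then N = 0. -/
/-! Write `R = ∏ R_i` and `M = ∏ M_i`. Since `M_i` is a quotient of `M`, the vanishing of `M ⊗_R N`
gives `M_i ⊗_R N = 0`. As `M_i` is an `R_i`-module, `M_i ⊗_R N = M_i ⊗_{R_i} (R_i ⊗_R N)`, so
faithfulness yields `R_i ⊗_R N = 0`. The inclusion `R_i → R` is `R`-linear and sends `1` to `e_i`;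
tensoring it with `N` shows that `e_i N = 0`. For Hausdorff `N`, this holding for every `i` means
`N = 0`. -/

open scoped Classical TensorProduct

noncomputable section

variable {I : Type*} (R : I → Type*) [∀ i, CommRing (R i)]

/-- The idempotent `e_i ∈ R = ∏_j R_j` whose `i`-th component is `1` and the others `0`. -/
def piIdem (i : I) : ∀ j, R j :=
  fun j => if j = i then 1 else 0

/-- A module `N` over `R = ∏_i R_i` is Hausdorff if the only element killed by all the
idempotents `e_i` is `0`. -/
def IsHausdorffMod (N : Type*) [AddCommGroup N] [Module (∀ i, R i) N] : Prop :=
  ∀ n : N, (∀ i, piIdem R i • n = 0) → n = 0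

variable (M : I → Type*) [∀ i, AddCommGroup (M i)] [∀ i, Module (R i) (M i)]

/-- Each `R_i`-module `M i` is regarded as a module over `R = ∏_j R_j` via the
projection `R → R_i`. -/
instance projModule (i : I) : Module (∀ j, R j) (M i) :=
  Module.compHom (M i) (Pi.evalRingHom R i)

section TensorFaithful

universe w

/-- An `A`-module `P` is tensor-faithful if `P ⊗[A] -` annihilates only the zero module. This
weakens faithful flatness by dropping flatness. Without flatness it does not suffice to test
cyclic modules, so the universe `w` of the test modules is a parameter. -/
def IsTensorFaithful (A P : Type*) [CommRing A] [AddCommGroup P] [Module A P] : Prop :=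
  ∀ (Q : Type w) [AddCommGroup Q] [Module A Q], Subsingleton (P ⊗[A] Q) → Subsingleton Q

variable (A P : Type*) [CommRing A] [AddCommGroup P] [Module A P]

theorem isTensorFaithful_of_faithfullyFlat [Module.FaithfullyFlat A P] :
    IsTensorFaithful.{w} A P :=
  fun _ _ _ => (Module.FaithfullyFlat.subsingleton_tensorProduct_iff_right A P).mp

end TensorFaithful

section TensorProduct

universe u v

theorem IsTensorFaithful.subsingleton_baseChange {A P : Type*} {B : Type u} {Q : Type v}
    [CommRing A] [CommRing B] [Algebra A B] [AddCommGroup P] [Module A P] [Module B P]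
    [IsScalarTower A B P] [AddCommGroup Q] [Module A Q]
    (hP : IsTensorFaithful.{max u v} B P) [Subsingleton (P ⊗[A] Q)] :
    Subsingleton (B ⊗[A] Q) :=
  hP _ (TensorProduct.AlgebraTensorModule.cancelBaseChange A B B P Q).toEquiv.subsingleton

theorem smul_eq_zero_of_subsingleton_tensorProduct {A P Q : Type*} [CommRing A]
    [AddCommGroup P] [Module A P] [AddCommGroup Q] [Module A Q] [Subsingleton (P ⊗[A] Q)]
    (f : P →ₗ[A] A) (p : P) (q : Q) : f p • q = 0 :=
  calc
    f p • q = TensorProduct.lid A Q (f.rTensor Q (p ⊗ₜ q)) := by simp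
    _ = 0 := by rw [Subsingleton.elim (p ⊗ₜ[A] q) 0, map_zero, map_zero]

end TensorProduct

section PiModule

universe u v

variable {I : Type*} {R : I → Type u} [∀ i, CommRing (R i)]
  {M : I → Type*} [∀ i, AddCommGroup (M i)] [∀ i, Module (R i) (M i)]

/-- The `R_i`-algebra structure over `R = ∏_j R_j` given by the projection. -/
instance projAlgebra (i : I) : Algebra (∀ j, R j) (R i) :=
  (Pi.evalRingHom R i).toAlgebra

instance projModule_isScalarTower (i : I) : IsScalarTower (∀ j, R j) (R i) (M i) :=
  .of_algebraMap_smul fun _ _ => rfl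

variable (M) in
/-- The projection `∏_j M_j → M_i`, linear over the product ring `∏_j R_j`. It differs from
`LinearMap.proj` in that each factor of the domain is a module over its own ring. -/
def piProj (i : I) : (∀ j, M j) →ₗ[∀ j, R j] M i where
  toFun m := m i
  map_add' _ _ := rfl
  map_smul' _ _ := rfl

theorem piProj_surjective (i : I) : Function.Surjective (piProj (R := R) M i) :=
  Function.surjective_eval i

theorem piIdem_eq_single (i : I) : piIdem R i = Pi.single i 1 := by
  ext j
  obtain rfl | h := eq_or_ne j i
  · simp [piIdem]
  · simp [piIdem, h]

variable (R) in
/-- The inclusion `R_i → ∏_j R_j` of the `i`-th factor, linear over the product ring. -/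
def piIncl (i : I) : R i →ₗ[∀ j, R j] ∀ j, R j where
  toFun := Pi.single i
  map_add' := Pi.single_add i
  map_smul' _ r := Pi.single_mul_right r

theorem piIncl_one (i : I) : piIncl R i 1 = piIdem R i :=
  (piIdem_eq_single i).symm

variable {N : Type v} [AddCommGroup N] [Module (∀ i, R i) N]

theorem IsTensorFaithful.piIdem_smul_eq_zero {i : I}
    (hM : IsTensorFaithful.{max u v} (R i) (M i)) [Subsingleton ((∀ j, M j) ⊗[∀ j, R j] N)]
    (n : N) : piIdem R i • n = 0 := by
  have : Subsingleton (M i ⊗[∀ j, R j] N) :=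
    (LinearMap.rTensor_surjective N (piProj_surjective i)).subsingleton
  have : Subsingleton (R i ⊗[∀ j, R j] N) := hM.subsingleton_baseChange
  rw [← piIncl_one]
  exact smul_eq_zero_of_subsingleton_tensorProduct (piIncl R i) 1 n

theorem product_faithful_on_Hausdorff_modules_general
    (hM : ∀ i, IsTensorFaithful.{max u v} (R i) (M i)) (hN : IsHausdorffMod R N)
    (htensor : ∀ t : (∀ i, M i) ⊗[∀ i, R i] N, t = 0) (n : N) : n = 0 :=
  have := subsingleton_of_forall_eq 0 htensor
  hN n fun i => (hM i).piIdem_smul_eq_zero n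

end PiModule

/-- If each `M_i` is a faithfully flat `R_i`-module and `N` is a Hausdorff
`∏_i R_i`-module with `(∏_i M_i) ⊗ N = 0`, then `N = 0`. -/
theorem product_faithful_on_Hausdorff_modules
    (hff : ∀ i, Module.FaithfullyFlat (R i) (M i))
    (N : Type*) [AddCommGroup N] [Module (∀ i, R i) N]
    (hN : IsHausdorffMod R N)
    (htensor : ∀ t : (∀ i, M i) ⊗[∀ i, R i] N, t = 0) :
    ∀ n : N, n = 0 :=
  product_faithful_on_Hausdorff_modules_general
    (fun i => have := hff i; isTensorFaithful_of_faithfullyFlat (R i) (M i)) hN htensor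

end
end

section
/- Let K be a subtorus of G and let α ∈ ℤ^r be a character that is nontrivial on K. Then multiplication by the Euler class e(α) on 𝒪_ℱ is a split monomorphism of 𝒪_{ℱ/K}-modules: it is injective and admits an 𝒪_{ℱ/K}-linear left inverse. -/
open scoped Classical

noncomputable section

/-- `H^*(BG/H) = Sym_ℚ(X(H) ⊗ ℚ)`, realized as the `ℚ`-subalgebra of `ℚ[x₁,…,x_r]`
generated by the linear forms of the characters trivial on `H`. -/
def HB {r : ℕ} (H : AddSubgroup (Torus r)) : Subalgebra ℚ (MvPolynomial (Fin r) ℚ) :=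
  Algebra.adjoin ℚ {p | ∃ α : Fin r → ℤ, IsTrivialOn α H ∧ p = lform α}

/-- `K` is the identity component of `H` (as sets: `K` is the image in `G` of the connected
component of `0` in the subspace `H`). -/
def IsIdComp {r : ℕ} (K H : AddSubgroup (Torus r)) : Prop :=
  (K : Set (Torus r)) =
    Subtype.val '' connectedComponent (⟨0, H.zero_mem⟩ : (H : Set (Torus r)))

/-- `ℱ/K`: the closed subgroups of `G` with identity component `K`. -/
def FKset (r : ℕ) (K : Subtorus r) : Type :=
  {H : AddSubgroup (Torus r) //
    IsClosed (H : Set (Torus r)) ∧ IsIdComp K.toAddSubgroup H}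

/-- The ring `𝒪_{ℱ/K} = ∏_{K̃ ∈ ℱ/K} H^*(BG/K̃)`. -/
abbrev OcalFK (r : ℕ) (K : Subtorus r) : Type :=
  ∀ H : FKset r K, ↥(HB H.1)

lemma isIdComp_self {r : ℕ} (K : Subtorus r) :
    IsIdComp K.toAddSubgroup K.toAddSubgroup := by
  haveI : ConnectedSpace ((K.toAddSubgroup : Set (Torus r))) :=
    Subtype.connectedSpace K.isConnected'
  unfold IsIdComp
  rw [PreconnectedSpace.connectedComponent_eq_univ, Set.image_univ, Subtype.range_coe]

/-- `K` itself is a member of `ℱ/K`. -/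
def fkSelf (r : ℕ) (K : Subtorus r) : FKset r K :=
  ⟨K.toAddSubgroup, K.isClosed', isIdComp_self K⟩

/-- The index map `F ↦ FK` from `ℱ` to `ℱ/K`, where `FK` is the closed subgroup generated
by `F` and `K`.  (The fact that the identity component of `FK` is `K` is a true statement of
point-set topology which we do not prove here; it is supplied through the `dite`.) -/
def fkIndex {r : ℕ} (K : Subtorus r) (F : FinSub r) : FKset r K :=
  if h : IsIdComp K.toAddSubgroup ((F.1 ⊔ K.toAddSubgroup).topologicalClosure)
  then ⟨(F.1 ⊔ K.toAddSubgroup).topologicalClosure,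
        AddSubgroup.isClosed_topologicalClosure _, h⟩
  else fkSelf r K

/-- The inflation map `𝒪_{ℱ/K} → 𝒪_ℱ`: the component at a finite subgroup `F` is the
projection onto the factor indexed by `FK` followed by the inclusion
`H^*(BG/FK) ⊆ ℚ[x₁,…,x_r]`. -/
def infl {r : ℕ} (K : Subtorus r) : OcalFK r K →+* OcalF r :=
  Pi.ringHom fun F =>
    ((HB (fkIndex K F).1).val.toRingHom).comp (Pi.evalRingHom _ (fkIndex K F))

/-- The idempotent of `𝒪_{ℱ/K}` supported at the index `i ∈ ℱ/K`. -/
def idemFK {r : ℕ} {K : Subtorus r} (i : FKset r K) : OcalFK r K :=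
  fun j => if j = i then 1 else 0

/-- An `𝒪_{ℱ/K}`-module is Hausdorff if the only element killed by all the idempotents of
the product decomposition indexed by `ℱ/K` is `0`. -/
def IsHausdorffFK (r : ℕ) (K : Subtorus r)
    (N : Type*) [AddCommGroup N] [Module (OcalFK r K) N] : Prop :=
  ∀ n : N, (∀ i : FKset r K, idemFK i • n = 0) → n = 0

/-- The multiplicative set `𝓔_K ⊆ 𝒪_ℱ` generated by the Euler classes of the characters
nontrivial on `K`. -/
def eulerSet {r : ℕ} (K : Subtorus r) : Submonoid (OcalF r) :=
  Submonoid.closure {x | ∃ α : Fin r → ℤ, ¬ IsTrivialOn α K.toAddSubgroup ∧ x = euler α}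

end

/-!
Write `𝔨` for the Lie algebra of `K`. Since `K` is connected, the characters trivial on `K` form a
saturated sublattice of `ℤ^r`, so a character `α` that is nontrivial on `K` takes the value `1` at
some rational tangent vector `w ∈ 𝔨`. The polynomials in `H^*(BG/K)` are invariant under translation
along `𝔨`, so precomposition with the projection `x ↦ x - α(x) w` is a ring endomorphism `π` of
`ℚ[x₁,…,x_r]` fixing `H^*(BG/K)`; it kills `α` and is congruent to the identity modulo `α`. Hence
`p ↦ (p - π p) / α` is an `H^*(BG/K)`-linear left inverse of multiplication by `α`. As `K ≤ FK`,
every coefficient ring `H^*(BG/FK)` lies in `H^*(BG/K)`, and the splitting of `e(α)` is obtained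
factor by factor.
-/

section Retraction

variable {A R : Type*} [CommSemiring A] [CommRing R] [Algebra A R]

theorem exists_linearMap_leftInverse_mul_of_dvd_sub {S : Subalgebra A R} (π : R →ₐ[A] R)
    (hS : S ≤ AlgHom.equalizer π (AlgHom.id A R)) {a : R} (ha : IsLeftRegular a) (hπa : π a = 0)
    (hdvd : ∀ x, a ∣ x - π x) :
    ∃ s : R →ₗ[S] R, ∀ x, s (a * x) = x := by
  choose s hs using hdvd
  have hadd (x y : R) : s (x + y) = s x + s y := ha <| by
    change a * s (x + y) = a * (s x + s y)
    rw [mul_add, ← hs, ← hs, ← hs, map_add]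
    ring
  have hsmul (c : S) (x : R) : s (c • x) = c • s x := ha <| by
    have hc : π c = c := hS c.2
    change a * s (c * x) = a * (c * s x)
    rw [mul_left_comm, ← hs, ← hs, map_mul, hc]
    ring
  refine ⟨⟨⟨s, hadd⟩, hsmul⟩, fun x => ha ?_⟩
  change a * s (a * x) = a * x
  rw [← hs, map_mul, hπa, zero_mul, sub_zero]

end Retraction

theorem dvd_sub_of_forall_dvd_X_sub {σ k B : Type*} [CommSemiring k] [CommRing B] [Algebra k B]
    {u : B} {f g : MvPolynomial σ k →ₐ[k] B}
    (h : ∀ i, u ∣ f (MvPolynomial.X i) - g (MvPolynomial.X i)) (p : MvPolynomial σ k) :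
    u ∣ f p - g p := by
  simp only [← Ideal.mem_span_singleton, ← Ideal.Quotient.mk_eq_mk_iff_sub_mem] at h ⊢
  have hfg : (Ideal.Quotient.mkₐ k (Ideal.span {u})).comp f =
      (Ideal.Quotient.mkₐ k (Ideal.span {u})).comp g := MvPolynomial.algHom_ext h
  exact DFunLike.congr_fun hfg p

section Shear

variable {σ k : Type*} [CommRing k]

/-- The endomorphism `p ↦ p(x - u(x) w)` of the polynomial ring. When `u` is a linear form with
`u(w) = 1`, it is precomposition with the linear projection along `w` onto the kernel of `u`. -/
noncomputable def shear (w : σ → k) (u : MvPolynomial σ k) :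
    MvPolynomial σ k →ₐ[k] MvPolynomial σ k :=
  MvPolynomial.aeval fun i => MvPolynomial.X i - MvPolynomial.C (w i) * u

theorem dvd_sub_shear (w : σ → k) (u p : MvPolynomial σ k) : u ∣ p - shear w u p := by
  refine dvd_sub_of_forall_dvd_X_sub (f := AlgHom.id k _) (fun i => ?_) p
  rw [AlgHom.id_apply, shear, MvPolynomial.aeval_X, sub_sub_cancel]
  exact dvd_mul_left _ _

end Shear

section LinearForms

variable {r : ℕ}

theorem eval_lform (w : Fin r → ℚ) (β : Fin r → ℤ) :
    MvPolynomial.eval w (lform β) = ∑ i, (β i : ℚ) * w i := by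
  simp [lform]

theorem shear_lform (w : Fin r → ℚ) (u : MvPolynomial (Fin r) ℚ) (β : Fin r → ℤ) :
    shear w u (lform β) = lform β - MvPolynomial.C (MvPolynomial.eval w (lform β)) * u := by
  rw [eval_lform]
  simp [shear, lform, mul_sub, Finset.sum_mul, mul_assoc]

theorem HB_le_equalizer_shear {H : AddSubgroup (Torus r)} {w : Fin r → ℚ}
    (hw : ∀ β, IsTrivialOn β H → MvPolynomial.eval w (lform β) = 0)
    (u : MvPolynomial (Fin r) ℚ) :
    HB H ≤ AlgHom.equalizer (shear w u) (AlgHom.id ℚ _) := by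
  refine AlgHom.adjoin_le_equalizer _ _ ?_
  rintro _ ⟨β, hβ, rfl⟩
  simp [shear_lform, hw β hβ]

end LinearForms

section Characters

variable {r : ℕ} {H : AddSubgroup (Torus r)}

theorem isTrivialOn_of_zsmul (hH : IsPreconnected (H : Set (Torus r))) {n : ℤ} (hn : n ≠ 0)
    {β : Fin r → ℤ} (h : IsTrivialOn (n • β) H) : IsTrivialOn β H := by
  have htorsion : {t : AddCircle (1 : ℝ) | n • t = 0}.Finite :=
    AddCircle.finite_torsion_of_isSMulRegular_int 1 n <|
      IsSMulRegular.of_right_eq_zero_of_smul fun t ht => by simpa [hn] using ht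
  have hmaps : Set.MapsTo (fun x : Torus r => ∑ i, β i • x i) H
      {t : AddCircle (1 : ℝ) | n • t = 0} := fun x hx => by
    simpa [Finset.smul_sum, mul_smul] using h x hx
  intro x hx
  have hconst := hH.constant_of_mapsTo htorsion.isDiscrete (by fun_prop) hmaps hx H.zero_mem
  simpa using hconst

theorem isTorsionFree_quotient_trivialChars (hH : IsPreconnected (H : Set (Torus r))) :
    Module.IsTorsionFree ℤ ((Fin r → ℤ) ⧸ AddSubgroup.toIntSubmodule (trivialChars H)) := by
  refine Module.IsTorsionFree.of_smul_eq_zero fun n x hx => ?_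
  obtain ⟨β, rfl⟩ := Submodule.Quotient.mk_surjective _ x
  rw [← Submodule.Quotient.mk_smul, Submodule.Quotient.mk_eq_zero] at hx
  rw [Submodule.Quotient.mk_eq_zero, or_iff_not_imp_left]
  exact fun hn => isTrivialOn_of_zsmul hH hn hx

theorem exists_eval_lform_eq_one (hH : IsPreconnected (H : Set (Torus r))) {α : Fin r → ℤ}
    (hα : ¬ IsTrivialOn α H) :
    ∃ w : Fin r → ℚ, (∀ β, IsTrivialOn β H → MvPolynomial.eval w (lform β) = 0) ∧
      MvPolynomial.eval w (lform α) = 1 := by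
  have := isTorsionFree_quotient_trivialChars hH
  obtain ⟨φ, hφα, hφ⟩ := Submodule.exists_dual_map_eq_bot_of_notMem
    (p := AddSubgroup.toIntSubmodule (trivialChars H)) hα inferInstance
  let w : Fin r → ℚ := fun i => φ (Pi.single i 1) / φ α
  have heval (β : Fin r → ℤ) : MvPolynomial.eval w (lform β) = φ β / φ α := by
    have hφβ : φ β = ∑ i, β i * φ (Pi.single i 1) := by
      simpa only [map_sum, map_smul, smul_eq_mul] using congrArg φ (pi_eq_sum_univ' β)
    rw [eval_lform, hφβ]
    simp only [w, Int.cast_sum, Int.cast_mul, Finset.sum_div, mul_div_assoc]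
  refine ⟨w, fun β hβ => ?_, ?_⟩
  · have hφβ : φ β = 0 := LinearMap.le_ker_iff_map.mpr hφ hβ
    rw [heval, hφβ, Int.cast_zero, zero_div]
  · rw [heval, div_self (Int.cast_ne_zero.mpr hφα)]

theorem exists_linearMap_leftInverse_lform_mul (hH : IsPreconnected (H : Set (Torus r)))
    {α : Fin r → ℤ} (hα : ¬ IsTrivialOn α H) :
    ∃ s : MvPolynomial (Fin r) ℚ →ₗ[HB H] MvPolynomial (Fin r) ℚ,
      ∀ p, s (lform α * p) = p := by
  obtain ⟨w, hw, hwα⟩ := exists_eval_lform_eq_one hH hα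
  have hne : lform α ≠ 0 := fun h => by simp [h] at hwα
  refine exists_linearMap_leftInverse_mul_of_dvd_sub (shear w (lform α))
    (HB_le_equalizer_shear hw _) (IsLeftCancelMulZero.mul_left_cancel_of_ne_zero hne) ?_
    (dvd_sub_shear w _)
  rw [shear_lform, hwα, map_one, one_mul, sub_self]

theorem exists_linearMap_leftInverse_euler_mul (hH : IsPreconnected (H : Set (Torus r)))
    {α : Fin r → ℤ} (hα : ¬ IsTrivialOn α H) (F : FinSub r) :
    ∃ s : MvPolynomial (Fin r) ℚ →ₗ[HB H] MvPolynomial (Fin r) ℚ,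
      ∀ p, s (euler α F * p) = p := by
  by_cases h : IsTrivialOn α F.1
  · simpa only [euler, if_pos h] using exists_linearMap_leftInverse_lform_mul hH hα
  · exact ⟨LinearMap.id, by simp [euler, h]⟩

end Characters

section Inflation

variable {r : ℕ}

theorem HB_anti {H H' : AddSubgroup (Torus r)} (h : H ≤ H') : HB H' ≤ HB H := by
  refine Algebra.adjoin_mono ?_
  rintro p ⟨β, hβ, rfl⟩
  exact ⟨β, fun x hx => hβ x (h hx), rfl⟩

theorem le_fkIndex (K : Subtorus r) (F : FinSub r) : K.toAddSubgroup ≤ (fkIndex K F).1 := by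
  by_cases h : IsIdComp K.toAddSubgroup ((F.1 ⊔ K.toAddSubgroup).topologicalClosure)
  · have hF : fkIndex K F = ⟨_, AddSubgroup.isClosed_topologicalClosure _, h⟩ := dif_pos h
    rw [hF]
    exact le_sup_right.trans (AddSubgroup.le_topologicalClosure _)
  · have hF : fkIndex K F = fkSelf r K := dif_neg h
    exact hF ▸ le_rfl

theorem infl_apply_mem_HB (K : Subtorus r) (c : OcalFK r K) (F : FinSub r) :
    infl K c F ∈ HB K.toAddSubgroup :=
  HB_anti (le_fkIndex K F) (c (fkIndex K F)).2

end Inflation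

/-- If `α` is a character nontrivial on the subtorus `K`, then multiplication
by the Euler class `e(α)` on `𝒪_ℱ` is a split monomorphism of `𝒪_{ℱ/K}`-modules: it is
injective and admits an `𝒪_{ℱ/K}`-linear left inverse (where `𝒪_ℱ` is an `𝒪_{ℱ/K}`-module
via the inflation map). -/
theorem euler_mul_split_mono_over_OFK
    (r : ℕ) (K : Subtorus r) (α : Fin r → ℤ)
    (hα : ¬ IsTrivialOn α K.toAddSubgroup) :
    Function.Injective (fun y : OcalF r => euler α * y) ∧
    ∃ s : OcalF r →+ OcalF r,
      (∀ (c : OcalFK r K) (y : OcalF r), s (infl K c * y) = infl K c * s y) ∧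
      (∀ y : OcalF r, s (euler α * y) = y) := by
  choose s hs using exists_linearMap_leftInverse_euler_mul K.isConnected'.isPreconnected hα
  let t : OcalF r →+ OcalF r :=
    AddMonoidHom.pi fun F => (s F).toAddMonoidHom.comp (Pi.evalAddMonoidHom _ F)
  have ht_infl (c : OcalFK r K) (y : OcalF r) : t (infl K c * y) = infl K c * t y :=
    funext fun F => (s F).map_smul ⟨infl K c F, infl_apply_mem_HB K c F⟩ (y F)
  have ht_euler (y : OcalF r) : t (euler α * y) = y := funext fun F => hs F (y F)
  exact ⟨Function.LeftInverse.injective ht_euler, t, ht_infl, ht_euler⟩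
end

section
/- Let R be a commutative Noetherian ring, I a nonempty index set, and (M_i)_{i∈I} a family of nonzero free R-modules. Then the product ∏_{i∈I} M_i is a faithfully flat R-module. -/
/-!
A flat module solves `∑ fₛ xₛ = 0` only by combinations of the scalar syzygies of `f`. Over a
coherent ring finitely many syzygies `g₁, …, gₖ` generate all of them, so in a product of flat
modules every coordinate of `x` is a combination of the same `gₘ`. The coordinatewise coefficients
assemble into elements of the product, and the equational criterion gives flatness. Faithfulness
is inherited from the factors, since `𝔪 P = P` passes to every quotient of `P`.
-/

noncomputable section

/-- A (left) coherent ring: every finitely generated (left) ideal is finitely presented. Over such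
a ring, arbitrary products of flat modules are flat. As with `IsNoetherianRing`, ideals of a
noncommutative ring are left ideals. -/
class IsCoherentRing (R : Type*) [Ring R] : Prop where
  finitePresentation_of_fg : ∀ J : Ideal R, J.FG → Module.FinitePresentation R J

namespace IsCoherentRing

variable {R : Type*} [Ring R]

instance of_isNoetherianRing [IsNoetherianRing R] : IsCoherentRing R where
  finitePresentation_of_fg J _ := Module.finitePresentation_of_finite R J

theorem fg_ker [IsCoherentRing R] {F : Type*} [AddCommGroup F] [Module R F] [Module.Finite R F]
    (f : F →ₗ[R] R) : (LinearMap.ker f).FG := by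
  have : Module.FinitePresentation R (LinearMap.range f) :=
    finitePresentation_of_fg _ (Submodule.FG.of_finite)
  rw [← LinearMap.ker_rangeRestrict]
  exact Module.FinitePresentation.fg_ker f.rangeRestrict f.surjective_rangeRestrict

end IsCoherentRing

section Flat

variable {R : Type*} [CommRing R]

theorem mem_ker_linearCombination_iff_sum_mul_eq_zero {ι : Type*} [Fintype ι] {f a : ι → R} :
    a ∈ LinearMap.ker (Fintype.linearCombination R f) ↔ ∑ s, f s * a s = 0 := by
  simp only [LinearMap.mem_ker, Fintype.linearCombination_apply, smul_eq_mul, mul_comm]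

theorem exists_eq_sum_smul_of_ker_le_span {M : Type*} [AddCommGroup M] [Module R M]
    [Module.Flat R M] {ι κ : Type*} [Fintype ι] [Fintype κ] {f : ι → R} {g : κ → ι → R}
    (hg : LinearMap.ker (Fintype.linearCombination R f) ≤ Submodule.span R (Set.range g))
    {x : ι → M} (hx : ∑ s, f s • x s = 0) :
    ∃ z : κ → M, ∀ s, x s = ∑ m, g m s • z m := by
  obtain ⟨n, a, y, hxy, hfa⟩ := Module.Flat.isTrivialRelation_of_sum_smul_eq_zero hx
  have column_mem_span (j : Fin n) : (a · j) ∈ Submodule.span R (Set.range g) :=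
    hg (mem_ker_linearCombination_iff_sum_mul_eq_zero.mpr (hfa j))
  choose c hc using fun j => (Submodule.mem_span_range_iff_exists_fun R).mp (column_mem_span j)
  have ha (s : ι) (j : Fin n) : a s j = ∑ m, g m s * c j m := by
    simpa [mul_comm] using (congrFun (hc j) s).symm
  refine ⟨fun m => ∑ j, c j m • y j, fun s => ?_⟩
  calc x s = ∑ j, ∑ m, (g m s * c j m) • y j := by simp_rw [hxy, ha, Finset.sum_smul]
    _ = ∑ m, ∑ j, (g m s * c j m) • y j := Finset.sum_comm
    _ = ∑ m, g m s • ∑ j, c j m • y j := by simp_rw [Finset.smul_sum, mul_smul]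

theorem flat_pi_of_isCoherentRing [IsCoherentRing R] {I : Type*} {M : I → Type*}
    [∀ i, AddCommGroup (M i)] [∀ i, Module R (M i)] [∀ i, Module.Flat R (M i)] :
    Module.Flat R (∀ i, M i) := by
  refine Module.Flat.of_forall_isTrivialRelation fun {l f x} hfx => ?_
  obtain ⟨k, g, hg⟩ := Submodule.fg_iff_exists_fin_generating_family.mp
    (IsCoherentRing.fg_ker (Fintype.linearCombination R f))
  have hfx_apply (i : I) : ∑ s, f s • x s i = 0 := by simpa using congrFun hfx i
  choose z hz using fun i => exists_eq_sum_smul_of_ker_le_span hg.ge (hfx_apply i)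
  refine ⟨k, fun s m => g m s, fun m i => z i m, fun s => ?_, fun m => ?_⟩
  · ext i
    simpa using hz i s
  · exact mem_ker_linearCombination_iff_sum_mul_eq_zero.mp
      (hg ▸ Submodule.subset_span (Set.mem_range_self m))

end Flat

theorem ideal_smul_top_ne_top_of_surjective {R M N : Type*} [Semiring R] [AddCommMonoid M]
    [Module R M] [AddCommMonoid N] [Module R N] {p : M →ₗ[R] N} (hp : Function.Surjective p)
    {J : Ideal R} (hJ : J • (⊤ : Submodule R N) ≠ ⊤) : J • (⊤ : Submodule R M) ≠ ⊤ := by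
  contrapose! hJ
  calc J • (⊤ : Submodule R N) = (J • (⊤ : Submodule R M)).map p := by
        rw [Submodule.map_smul'', Submodule.map_top, LinearMap.range_eq_top.mpr hp]
    _ = ⊤ := by rw [hJ, Submodule.map_top, LinearMap.range_eq_top.mpr hp]

theorem product_of_free_faithfullyFlat_general {R : Type*} [CommRing R] [IsCoherentRing R]
    {I : Type*} {M : I → Type*} [∀ i, AddCommGroup (M i)] [∀ i, Module R (M i)]
    [∀ i, Module.Flat R (M i)]
    (hM : ∀ m : Ideal R, m.IsMaximal → ∃ i, m • (⊤ : Submodule R (M i)) ≠ ⊤) :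
    Module.FaithfullyFlat R (∀ i, M i) where
  toFlat := flat_pi_of_isCoherentRing
  submodule_ne_top m hm := by
    obtain ⟨i, hi⟩ := hM m hm
    exact ideal_smul_top_ne_top_of_surjective (LinearMap.proj_surjective (R := R) i) hi

/-- Over a commutative Noetherian ring `R`, a product of a nonempty family of
nonzero free `R`-modules is faithfully flat. -/
theorem product_of_free_faithfullyFlat
    (R : Type*) [CommRing R] [IsNoetherianRing R]
    (I : Type*) [Nonempty I]
    (M : I → Type*) [∀ i, AddCommGroup (M i)] [∀ i, Module R (M i)]
    (hfree : ∀ i, Module.Free R (M i)) (hnz : ∀ i, Nontrivial (M i)) :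
    Module.FaithfullyFlat R (∀ i, M i) :=
  product_of_free_faithfullyFlat_general fun _ hm =>
    ⟨Classical.arbitrary I, Module.FaithfullyFlat.submodule_ne_top hm⟩

end
end

section
/- The R-module T is an injective R-module. -/
noncomputable section

/-- `R = ℚ[x₁,…,x_r]`. -/
abbrev PolyR (r : ℕ) : Type := MvPolynomial (Fin r) ℚ

/-- The maximal ideal `𝔪 = (x₁,…,x_r)` of polynomials with zero constant term. -/
def mIdeal (r : ℕ) : Ideal (PolyR r) := Ideal.span (Set.range MvPolynomial.X)

/-- The `ℚ`-linear dual `Hom_ℚ(R, ℚ)`. -/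
abbrev DualR (r : ℕ) : Type := PolyR r →ₗ[ℚ] ℚ

/-- The dual is an `R`-module via `(a · φ)(b) = φ(a b)`. -/
instance dualRModule (r : ℕ) : Module (PolyR r) (DualR r) where
  smul a φ := φ.comp (LinearMap.mulLeft ℚ a)
  one_smul φ := LinearMap.ext fun p => by
    show φ (1 * p) = φ p
    rw [one_mul]
  mul_smul a b φ := LinearMap.ext fun p => by
    show φ (a * b * p) = φ (b * (a * p))
    ring_nf
  smul_zero a := LinearMap.ext fun p => by
    show (0 : DualR r) (a * p) = 0
    rfl
  smul_add a φ ψ := LinearMap.ext fun p => by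
    show (φ + ψ) (a * p) = φ (a * p) + ψ (a * p)
    rfl
  add_smul a b φ := LinearMap.ext fun p => by
    show φ ((a + b) * p) = φ (a * p) + φ (b * p)
    rw [add_mul, map_add]
  zero_smul φ := LinearMap.ext fun p => by
    show φ (0 * p) = 0
    rw [zero_mul, map_zero]

lemma DualR.smul_apply {r : ℕ} (a : PolyR r) (φ : DualR r) (p : PolyR r) :
    (a • φ : DualR r) p = φ (a * p) := rfl

/-- The `R`-submodule `T ⊆ Hom_ℚ(R,ℚ)` of functionals vanishing on some power of `𝔪`
(it realizes `H_*(B𝕋^r; ℚ)`). -/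
def Tsub (r : ℕ) : Submodule (PolyR r) (DualR r) where
  carrier := {φ | ∃ n : ℕ, ∀ p ∈ (mIdeal r) ^ n, φ p = 0}
  zero_mem' := ⟨0, fun p _ => rfl⟩
  add_mem' := by
    rintro φ ψ ⟨n, hn⟩ ⟨m, hm⟩
    refine ⟨n + m, fun p hp => ?_⟩
    have hpn : p ∈ (mIdeal r) ^ n := Ideal.pow_le_pow_right (by omega) hp
    have hpm : p ∈ (mIdeal r) ^ m := Ideal.pow_le_pow_right (by omega) hp
    show φ p + ψ p = 0
    rw [hn p hpn, hm p hpm, add_zero]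
  smul_mem' := by
    rintro a φ ⟨n, hn⟩
    refine ⟨n, fun p hp => ?_⟩
    rw [DualR.smul_apply]
    exact hn _ (Ideal.mul_mem_left _ a hp)

/-- `T`, the `𝔪`-power-torsion part of the dual of `R`, as an `R`-module. -/
abbrev Tmod (r : ℕ) : Type := ↥(Tsub r)

noncomputable instance (r : ℕ) : AddCommGroup (Tmod r) := inferInstance

noncomputable instance (r : ℕ) : Module (PolyR r) (Tmod r) := inferInstance

/-- An `R`-module is `𝔪`-power-torsion if each element is annihilated by a power of `𝔪`. -/
def IsMTorsion (r : ℕ) (N : Type*) [AddCommGroup N] [Module (PolyR r) N] : Prop :=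
  ∀ x : N, ∃ n : ℕ, ∀ a ∈ (mIdeal r) ^ n, a • x = 0

end

/-!
Two facts combine. First, `Hom_k(A, W)` inherits injectivity from `W`: evaluating an `A`-linear map
`J → Hom_k(A, W)` at `1` gives a `k`-linear map `J → W`, and any `k`-linear extension `A → W` of it
is the element of `Hom_k(A, W)` that Baer's criterion asks for. Second, over a Noetherian ring the
`I`-power-torsion `Γ_I(E)` of an injective module `E` is injective: a map `J → Γ_I(E)` from an ideal
kills `I ^ n J` for some `n`, hence `I ^ m ∩ J` for some `m` by Artin–Rees, so its extension `A → E`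
can be chosen to kill `I ^ m` and then takes values in `Γ_I(E)`.
-/

section PowTorsion

variable {R M E : Type*} [CommRing R] [AddCommGroup M] [Module R M] [AddCommGroup E] [Module R E]

variable (E) in
/-- The `I`-power-torsion submodule `Γ_I(E)`: the elements of `E` annihilated by some power
of `I`. -/
def powTorsion (I : Ideal R) : Submodule R E :=
  ⨆ n : ℕ, Submodule.torsionBySet R E ↑(I ^ n)

theorem monotone_torsionBySet_pow (I : Ideal R) :
    Monotone fun n : ℕ ↦ Submodule.torsionBySet R E ↑(I ^ n) :=
  fun m n h ↦ Submodule.torsionBySet_le_torsionBySet_pow m n h I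

theorem mem_powTorsion_iff {I : Ideal R} {x : E} :
    x ∈ powTorsion E I ↔ ∃ n : ℕ, ∀ a ∈ I ^ n, a • x = 0 := by
  simp [powTorsion, Submodule.mem_iSup_of_directed _ (monotone_torsionBySet_pow I).directed_le]

theorem exists_le_torsionBySet_pow {I : Ideal R} {N : Submodule R E} (hN : N.FG)
    (hle : N ≤ powTorsion E I) : ∃ n : ℕ, N ≤ Submodule.torsionBySet R E ↑(I ^ n) := by
  have hsup : ⨆ n : ℕ, N ⊓ Submodule.torsionBySet R E ↑(I ^ n) = N := by
    rw [← (monotone_torsionBySet_pow I).directed_le.inf_iSup_eq]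
    exact inf_eq_left.mpr hle
  obtain ⟨n, hn⟩ := hN.stabilizes_of_iSup_eq
    ⟨_, monotone_const.inf (monotone_torsionBySet_pow I)⟩ hsup
  exact ⟨n, inf_eq_left.mp hn.symm⟩

theorem exists_pow_smul_top_le_ker [Module.Finite R M] {I : Ideal R}
    (g : M →ₗ[R] powTorsion E I) : ∃ n : ℕ, I ^ n • ⊤ ≤ LinearMap.ker g := by
  obtain ⟨n, hn⟩ := exists_le_torsionBySet_pow (I := I)
    (N := LinearMap.range ((powTorsion E I).subtype ∘ₗ g)) (Submodule.FG.of_finite)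
    (by rintro _ ⟨x, rfl⟩; exact (g x).2)
  refine ⟨n, Submodule.smul_le.mpr fun a ha x _ ↦ Subtype.ext ?_⟩
  rw [map_smul]
  exact (Submodule.mem_torsionBySet_iff _ _).mp (hn ⟨x, rfl⟩) ⟨a, ha⟩

theorem exists_comap_subtype_pow_smul_top_le [IsNoetherianRing R] [Module.Finite R M]
    (I : Ideal R) (N : Submodule R M) (n : ℕ) :
    ∃ m : ℕ, (I ^ m • ⊤ : Submodule R M).comap N.subtype ≤ I ^ n • ⊤ := by
  obtain ⟨k, hk⟩ := I.exists_pow_inf_eq_pow_smul N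
  refine ⟨n + k, ?_⟩
  have hinf : I ^ (n + k) • ⊤ ⊓ N ≤ I ^ n • N := by
    rw [hk (n + k) (Nat.le_add_left k n), Nat.add_sub_cancel]
    exact smul_mono_right _ inf_le_right
  calc (I ^ (n + k) • ⊤ : Submodule R M).comap N.subtype
      = (I ^ (n + k) • ⊤ ⊓ N).comap N.subtype := by
        rw [Submodule.comap_inf, Submodule.comap_subtype_self, inf_top_eq]
    _ ≤ (I ^ n • N).comap N.subtype := Submodule.comap_mono hinf
    _ = ((I ^ n • ⊤ : Submodule R N).map N.subtype).comap N.subtype := by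
        rw [Submodule.map_smul'', N.map_subtype_top]
    _ = I ^ n • ⊤ := Submodule.comap_map_eq_of_injective N.subtype_injective _

end PowTorsion

theorem exists_extend_le_ker {R M E : Type*} [Ring R] [AddCommGroup M] [Module R M]
    [AddCommGroup E] [Module R E] (hE : Module.Baer R E) {N L : Submodule R M} {g : N →ₗ[R] E}
    (hg : L.comap N.subtype ≤ LinearMap.ker g) :
    ∃ g' : M →ₗ[R] E, L ≤ LinearMap.ker g' ∧ g' ∘ₗ N.subtype = g := by
  let i : (N ⧸ L.comap N.subtype) →ₗ[R] M ⧸ L := (L.comap N.subtype).mapQ L N.subtype le_rfl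
  have hi : Function.Injective i := by
    rw [← LinearMap.ker_eq_bot, Submodule.ker_mapQ, Submodule.mkQ_map_self]
  obtain ⟨h, hh⟩ := hE.extension_property i hi ((L.comap N.subtype).liftQ g hg)
  exact ⟨h ∘ₗ L.mkQ, L.ker_mkQ.ge.trans (LinearMap.ker_le_ker_comp _ _),
    LinearMap.ext fun x ↦ LinearMap.congr_fun hh (Submodule.Quotient.mk x)⟩

theorem baer_powTorsion {R E : Type*} [CommRing R] [IsNoetherianRing R] [AddCommGroup E]
    [Module R E] (hE : Module.Baer R E) (I : Ideal R) : Module.Baer R (powTorsion E I) := by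
  intro J g
  obtain ⟨n, hn⟩ := exists_pow_smul_top_le_ker g
  obtain ⟨m, hm⟩ := exists_comap_subtype_pow_smul_top_le I J n
  obtain ⟨g', hker, hext⟩ := exists_extend_le_ker hE
    (hm.trans (hn.trans (LinearMap.ker_le_ker_comp g (powTorsion E I).subtype)))
  have hmem (a : R) : g' a ∈ powTorsion E I := mem_powTorsion_iff.mpr ⟨m, fun b hb ↦ by
    rw [← map_smul]
    exact hker (Submodule.smul_mem_smul hb trivial)⟩
  exact ⟨g'.codRestrict _ hmem, fun x hx ↦ Subtype.ext (LinearMap.congr_fun hext ⟨x, hx⟩)⟩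

section Dual

variable {k A W : Type*} [CommRing k] [AddCommGroup W] [Module k W]

theorem baer_dual [Ring A] [Algebra k A] [Module A (A →ₗ[k] W)]
    (hsmul : ∀ (a : A) (φ : A →ₗ[k] W) (b : A), (a • φ) b = φ (b * a)) (hW : Module.Baer k W) :
    Module.Baer A (A →ₗ[k] W) := by
  intro J g
  have : IsScalarTower k A (A →ₗ[k] W) := ⟨fun c a φ ↦ LinearMap.ext fun b ↦ by
    rw [hsmul, mul_smul_comm, map_smul, LinearMap.smul_apply, hsmul]⟩
  obtain ⟨μ, hμ⟩ := hW.extension_property (J.subtype.restrictScalars k) J.subtype_injective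
    (LinearMap.applyₗ 1 ∘ₗ g.restrictScalars k)
  refine ⟨LinearMap.toSpanSingleton A _ μ, fun x hx ↦ LinearMap.ext fun b ↦ ?_⟩
  calc (x • μ) b = μ (b * x) := hsmul x μ b
    _ = g (b • ⟨x, hx⟩) 1 := LinearMap.congr_fun hμ ⟨b * x, J.mul_mem_left b hx⟩
    _ = g ⟨x, hx⟩ b := by rw [map_smul, hsmul, one_mul]

variable [CommRing A] [Algebra k A] [Module A (A →ₗ[k] W)]

theorem mem_powTorsion_dual_iff
    (hsmul : ∀ (a : A) (φ : A →ₗ[k] W) (b : A), (a • φ) b = φ (a * b)) {I : Ideal A}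
    {φ : A →ₗ[k] W} : φ ∈ powTorsion (A →ₗ[k] W) I ↔ ∃ n : ℕ, ∀ p ∈ I ^ n, φ p = 0 := by
  refine mem_powTorsion_iff.trans (exists_congr fun n ↦ ⟨fun h p hp ↦ ?_, fun h a ha ↦ ?_⟩)
  · rw [← mul_one p, ← hsmul, h p hp, LinearMap.zero_apply]
  · exact LinearMap.ext fun b ↦ (hsmul a φ b).trans (h _ (Ideal.mul_mem_right b _ ha))

theorem Tmod_injective_general [IsNoetherianRing A]
    (hsmul : ∀ (a : A) (φ : A →ₗ[k] W) (b : A), (a • φ) b = φ (a * b)) (hW : Module.Baer k W)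
    (I : Ideal A) : Module.Injective A (powTorsion (A →ₗ[k] W) I) :=
  (baer_powTorsion (baer_dual (fun a φ b ↦ by rw [hsmul, mul_comm]) hW) I).injective

end Dual

theorem Tsub_eq_powTorsion (r : ℕ) : Tsub r = powTorsion (DualR r) (mIdeal r) :=
  Submodule.ext fun _ ↦ (mem_powTorsion_dual_iff DualR.smul_apply).symm

/-- `T` is an injective `R`-module. -/
theorem Tmod_injective (r : ℕ) : Module.Injective (PolyR r) (Tmod r) := by
  have hT := Tmod_injective_general DualR.smul_apply
    (.of_injective (Module.injective_of_isSemisimpleRing ℚ ℚ)) (mIdeal r)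
  rwa [← Tsub_eq_powTorsion] at hT
end

section
/- Every 𝔪-power-torsion R-module N admits an injective R-module homomorphism N → ⨁_{j∈J} T into a direct sum of copies of T whose cokernel is again an 𝔪-power-torsion R-module. -/
/-!
`T` is cofree among `𝔪`-power-torsion modules: a linear functional `l` on a torsion module `N`
induces the `R`-linear map `x ↦ (a ↦ l (a • x))` from `N` to `T`, and evaluation at `1` recovers
`l`. Apply this to the coordinate functionals of a `ℚ`-basis of `N`. The resulting map to the
product of copies of `T` is injective because a vector is determined by its coordinates, and it
lands in the direct sum because the orbit of a vector killed by `𝔪 ^ n` is a quotient of the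
finite-dimensional space `R ⧸ 𝔪 ^ n`, hence involves only finitely many coordinates. The cokernel is
torsion because `T` is.
-/

universe u

section PowerTorsion

variable {A : Type*}

/-- `I`-power-torsion modules for an ideal `I`; unfolds to `IsMTorsion r` when `I = mIdeal r`. -/
def IsPowerTorsion [CommSemiring A] (I : Ideal A) (M : Type*) [AddCommMonoid M] [Module A M] :
    Prop :=
  ∀ x : M, ∃ n : ℕ, ∀ a ∈ I ^ n, a • x = 0

lemma IsPowerTorsion.finsupp [CommSemiring A] {I : Ideal A} {M : Type*} [AddCommMonoid M]
    [Module A M] (hM : IsPowerTorsion I M) (J : Type*) : IsPowerTorsion I (J →₀ M) := by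
  intro g
  choose n hn using hM
  refine ⟨g.support.sup fun j => n (g j), fun a ha => Finsupp.ext fun j => ?_⟩
  by_cases hj : j ∈ g.support
  · exact hn (g j) a (Ideal.pow_le_pow_right (Finset.le_sup (f := fun j => n (g j)) hj) ha)
  · simp [Finsupp.notMem_support_iff.mp hj]

lemma IsPowerTorsion.quotient [CommRing A] {I : Ideal A} {M : Type*} [AddCommGroup M]
    [Module A M] (hM : IsPowerTorsion I M) (P : Submodule A M) : IsPowerTorsion I (M ⧸ P) := by
  intro y
  obtain ⟨x, rfl⟩ := P.mkQ_surjective y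
  obtain ⟨n, hn⟩ := hM x
  exact ⟨n, fun a ha => by rw [← map_smul, hn a ha, map_zero]⟩

end PowerTorsion

section Finiteness

lemma exists_finset_support_repr_subset_of_fg {k M J : Type*} [Semiring k] [AddCommMonoid M]
    [Module k M] (b : Module.Basis J k M) {P : Submodule k M} (hP : P.FG) :
    ∃ S : Finset J, ∀ y ∈ P, (b.repr y).support ⊆ S := by
  classical
  obtain ⟨t, rfl⟩ := hP
  refine ⟨t.biUnion fun y => (b.repr y).support, fun y hy => ?_⟩
  suffices Submodule.span k t ≤ (Finsupp.supported k k _).comap b.repr.toLinearMap from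
    Finset.coe_subset.mp (this hy)
  exact Submodule.span_le.mpr fun z hz =>
    Finset.coe_subset.mpr (Finset.subset_biUnion_of_mem (fun y => (b.repr y).support) hz)

variable {k A : Type*} [CommRing k] [CommRing A] [Algebra k A] {I : Ideal A}

lemma fg_restrictScalars_span_singleton {N : Type*} [AddCommGroup N] [Module A N] [Module k N]
    [IsScalarTower k A N] [Module.Finite k (A ⧸ I)] {x : N} (hx : ∀ a ∈ I, a • x = 0) :
    ((Submodule.span A {x}).restrictScalars k).FG := by
  let orbitMap : A ⧸ I →ₗ[A] N := I.liftQ (LinearMap.toSpanSingleton A N x) hx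
  have range_orbitMap : LinearMap.range orbitMap = Submodule.span A {x} :=
    (Submodule.range_liftQ _ _ _).trans (LinearMap.range_toSpanSingleton x)
  rw [← range_orbitMap, ← LinearMap.range_restrictScalars, ← Module.Finite.iff_fg]
  infer_instance

lemma moduleFinite_quotient_pow [Module.Finite k (A ⧸ I)] (hI : I.FG) (n : ℕ) :
    Module.Finite k (A ⧸ I ^ n) := by
  obtain rfl | hn := eq_or_ne n 0
  · rw [pow_zero, Ideal.one_eq_top]
    infer_instance
  have hle : I ^ n ≤ I := Ideal.pow_le_self hn
  have hker : RingHom.ker (Ideal.Quotient.factorₐ k hle) = I.map (Ideal.Quotient.mk (I ^ n)) :=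
    Ideal.Quotient.factor_ker hle
  refine Module.finite_of_surjective_of_ker_le_nilradical (Ideal.Quotient.factorₐ k hle)
    (Ideal.Quotient.factor_surjective hle) ?_ ?_
  · rw [hker, Ideal.map_le_iff_le_comap]
    exact fun a ha => ⟨n, by
      rw [← map_pow]
      exact Ideal.Quotient.eq_zero_iff_mem.mpr (Ideal.pow_mem_pow ha n)⟩
  · rw [hker]
    exact hI.map _

instance moduleFinite_quotient_idealOfVars (σ R : Type*) [CommRing R] :
    Module.Finite R (MvPolynomial σ R ⧸ MvPolynomial.idealOfVars σ R) := by
  refine .of_surjective (Algebra.linearMap R _) fun q => ?_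
  obtain ⟨p, rfl⟩ := Ideal.Quotient.mk_surjective q
  refine ⟨p.coeff 0, Ideal.Quotient.eq.mpr ?_⟩
  rw [← pow_one (MvPolynomial.idealOfVars σ R), MvPolynomial.mem_pow_idealOfVars_iff']
  intro d hd
  obtain rfl : d = 0 := (Finsupp.degree_eq_zero_iff d).mp (Nat.lt_one_iff.mp hd)
  simp

end Finiteness

section Dual

variable (k A : Type*) [CommRing k] [CommRing A] [Algebra k A]

/-- The `k`-linear dual of a commutative `k`-algebra `A` as an `A`-module via
`(a • φ) b = φ (a * b)`. It is a type synonym because on `A →ₗ[k] k` this action would compete, for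
`A = k`, with the pointwise one; for `A = PolyR r` it unfolds to `DualR r`. -/
def AlgebraDual : Type _ := A →ₗ[k] k

namespace AlgebraDual

noncomputable instance : AddCommGroup (AlgebraDual k A) :=
  inferInstanceAs (AddCommGroup (A →ₗ[k] k))

instance : FunLike (AlgebraDual k A) A k := inferInstanceAs (FunLike (A →ₗ[k] k) A k)

noncomputable instance : Module A (AlgebraDual k A) where
  smul a φ := LinearMap.comp φ (LinearMap.mulLeft k a)
  one_smul φ := DFunLike.ext _ _ fun p => congrArg φ (one_mul p)
  mul_smul a b φ := DFunLike.ext _ _ fun p => congrArg φ <|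
    show a * b * p = b * (a * p) by ring
  smul_zero _ := rfl
  smul_add _ _ _ := rfl
  add_smul a b φ := DFunLike.ext _ _ fun p =>
    (congrArg φ (add_mul a b p)).trans (LinearMap.map_add φ (a * p) (b * p))
  zero_smul φ := DFunLike.ext _ _ fun p =>
    (congrArg φ (zero_mul p)).trans (LinearMap.map_zero φ)

end AlgebraDual

variable {A}

/-- The `A`-module of `k`-linear functionals on `A` vanishing on some power of `I`, the analogue of
`T` for the pair `(A, I)`; it unfolds to `Tsub r` for `I = mIdeal r`. -/
def powerTorsionDual (I : Ideal A) : Submodule A (AlgebraDual k A) where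
  carrier := {φ | ∃ n : ℕ, ∀ p ∈ I ^ n, φ p = 0}
  zero_mem' := ⟨0, fun _ _ => rfl⟩
  add_mem' := by
    rintro φ ψ ⟨m, hm⟩ ⟨n, hn⟩
    refine ⟨m + n, fun p hp => ?_⟩
    change φ p + ψ p = 0
    rw [hm p (Ideal.pow_le_pow_right (m.le_add_right n) hp),
      hn p (Ideal.pow_le_pow_right (n.le_add_left m) hp), add_zero]
  smul_mem' := by
    rintro a φ ⟨n, hn⟩
    exact ⟨n, fun p hp => hn _ (Ideal.mul_mem_left _ a hp)⟩

lemma isPowerTorsion_powerTorsionDual (I : Ideal A) : IsPowerTorsion I (powerTorsionDual k I) := by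
  rintro ⟨φ, n, hn⟩
  exact ⟨n, fun a ha => Subtype.ext (DFunLike.ext _ _ fun p => hn _ (Ideal.mul_mem_right p _ ha))⟩

variable {k} {I : Ideal A} {N : Type*} [AddCommGroup N] [Module A N] [Module k N]
  [IsScalarTower k A N]

/-- The `A`-linear map `x ↦ (a ↦ l (a • x))` induced by a `k`-linear functional `l` on an
`I`-power-torsion module; it exhibits `powerTorsionDual k I` as cofree among such modules. -/
def cofreeLift (hN : IsPowerTorsion I N) (l : N →ₗ[k] k) : N →ₗ[A] powerTorsionDual k I where
  toFun x := ⟨l ∘ₗ (LinearMap.toSpanSingleton A N x).restrictScalars k, by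
    obtain ⟨n, hn⟩ := hN x
    exact ⟨n, fun p hp => (congrArg l (hn p hp)).trans (map_zero l)⟩⟩
  map_add' x y := Subtype.ext <| DFunLike.ext _ _ fun p => by
    change l (p • (x + y)) = l (p • x) + l (p • y)
    rw [smul_add, map_add]
  map_smul' a x := Subtype.ext <| DFunLike.ext _ _ fun p => by
    change l (p • a • x) = l ((a * p) • x)
    rw [mul_comm, mul_smul]

lemma cofreeLift_apply_apply (hN : IsPowerTorsion I N) (l : N →ₗ[k] k) (x : N) (a : A) :
    (cofreeLift hN l x : AlgebraDual k A) a = l (a • x) := rfl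

lemma cofreeLift_apply_one (hN : IsPowerTorsion I N) (l : N →ₗ[k] k) (x : N) :
    (cofreeLift hN l x : AlgebraDual k A) 1 = l x := by
  rw [cofreeLift_apply_apply, one_smul]

end Dual

section CoordEmbedding

variable {k A N J : Type*} [CommRing k] [CommRing A] [Algebra k A] {I : Ideal A}
  [AddCommGroup N] [Module A N] [Module k N] [IsScalarTower k A N]
  (hI : ∀ n, Module.Finite k (A ⧸ I ^ n)) (hN : IsPowerTorsion I N) (b : Module.Basis J k N)

include hI in
lemma finite_support_cofreeLift_coord (x : N) :
    (Function.support fun j => cofreeLift hN (b.coord j) x).Finite := by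
  obtain ⟨n, hn⟩ := hN x
  have := hI n
  obtain ⟨S, hS⟩ := exists_finset_support_repr_subset_of_fg b
    (fg_restrictScalars_span_singleton (k := k) hn)
  refine S.finite_toSet.subset fun j hj => ?_
  obtain ⟨a, ha⟩ : ∃ a, b.repr (a • x) j ≠ 0 := by
    by_contra! h
    exact hj (Subtype.ext (DFunLike.ext _ _ h))
  exact hS (a • x) (Submodule.smul_mem _ a (Submodule.mem_span_singleton_self x))
    (Finsupp.mem_support_iff.mpr ha)

/-- The map to a direct sum of copies of the torsion dual whose components are the maps induced by
the coordinate functionals of the basis `b`. -/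
noncomputable def coordEmbedding : N →ₗ[A] J →₀ powerTorsionDual k I where
  toFun x := Finsupp.ofSupportFinite _ (finite_support_cofreeLift_coord hI hN b x)
  map_add' x y := Finsupp.ext fun j => map_add (cofreeLift hN (b.coord j)) x y
  map_smul' a x := Finsupp.ext fun j => map_smul (cofreeLift hN (b.coord j)) a x

lemma coordEmbedding_apply (x : N) (j : J) :
    coordEmbedding hI hN b x j = cofreeLift hN (b.coord j) x := rfl

lemma coordEmbedding_injective : Function.Injective (coordEmbedding hI hN b) := by
  refine fun x y hxy => b.ext_elem fun j => ?_
  have hj : cofreeLift hN (b.coord j) x = cofreeLift hN (b.coord j) y := by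
    rw [← coordEmbedding_apply hI, hxy, coordEmbedding_apply]
  rw [← b.coord_apply, ← cofreeLift_apply_one hN, hj, cofreeLift_apply_one, b.coord_apply]

end CoordEmbedding

theorem embed_torsion_in_sum_of_T_general {k A : Type*} {N : Type u} [CommRing k] [CommRing A]
    [Algebra k A] {I : Ideal A} (hI : ∀ n, Module.Finite k (A ⧸ I ^ n)) [AddCommGroup N]
    [Module A N] [Module k N] [IsScalarTower k A N] [Module.Free k N] (hN : IsPowerTorsion I N) :
    ∃ (J : Type u) (f : N →ₗ[A] (J →₀ powerTorsionDual k I)),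
      Function.Injective f ∧
      IsPowerTorsion I ((J →₀ powerTorsionDual k I) ⧸ LinearMap.range f) :=
  let b := Module.Free.chooseBasis k N
  ⟨_, coordEmbedding hI hN b, coordEmbedding_injective hI hN b,
    ((isPowerTorsion_powerTorsionDual k I).finsupp _).quotient _⟩

/-- Every `𝔪`-power-torsion `R`-module `N` embeds in a direct sum of copies
of `T` with `𝔪`-power-torsion cokernel. -/
theorem embed_torsion_in_sum_of_T
    (r : ℕ) (N : Type) [AddCommGroup N] [Module (PolyR r) N] (hN : IsMTorsion r N) :
    ∃ (J : Type) (f : N →ₗ[PolyR r] (J →₀ Tmod r)),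
      Function.Injective f ∧
      IsMTorsion r ((J →₀ Tmod r) ⧸ LinearMap.range f) := by
  let _ : Module ℚ N := Module.compHom N (algebraMap ℚ (PolyR r))
  have : IsScalarTower ℚ (PolyR r) N := .of_compHom ℚ (PolyR r) N
  exact embed_torsion_in_sum_of_T_general (k := ℚ)
    (moduleFinite_quotient_pow (MvPolynomial.idealOfVars_fg (Fin r) ℚ)) hN
end

section
/- Every 𝔪-power-torsion R-module N admits an exact sequence of R-modules 0 → N → I_0 → I_1 → ⋯ → I_r → 0 in which each I_j is both an injective R-module and 𝔪-power-torsion; in particular every 𝔪-power-torsion R-module has injective dimension at most r. -/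
/-!
Everything reduces to two facts about a Noetherian ring `R` of global dimension at most `r`. First,
`R = k[x₁, …, x_r]` is one: for an `A[X]`-module `M` the sequence
`0 → A[X] ⊗ M → A[X] ⊗ M → M → 0`, with first map `X ⊗ 1 - 1 ⊗ X`, shows that adjoining a variable
raises the global dimension by at most one. Secondly, by the Artin–Rees lemma, the `J`-power-torsion
part of an injective module is injective, so every `J`-power-torsion module embeds into an injective
`J`-power-torsion module. The cokernel of such an embedding is again `J`-power-torsion and its
injective dimension has dropped by one, so after `r` steps the cokernel itself is injective.
-/

universe u u' v v' w

open CategoryTheory TensorProduct Polynomial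

section CharacteristicSequence

variable {A : Type u} [CommRing A] {M : Type v} [AddCommGroup M] [Module A M]

variable (A) in
/-- The coefficients of `t : A[X] ⊗[A] M`, viewed as a polynomial with coefficients in `M`. -/
noncomputable def tensorCoeff : A[X] ⊗[A] M ≃ₗ[A] ℕ →₀ M :=
  TensorProduct.equivFinsuppOfBasisLeft (Polynomial.basisMonomials A)

lemma tensorCoeff_tmul (p : A[X]) (m : M) (k : ℕ) :
    tensorCoeff A (p ⊗ₜ m) k = p.coeff k • m :=
  TensorProduct.equivFinsuppOfBasisLeft_apply_tmul_apply _ _ _ _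

variable (A M) [Module A[X] M] [IsScalarTower A A[X] M]

/-- The endomorphism `X ⊗ 1 - 1 ⊗ X` of `A[X] ⊗[A] M`, for an `A[X]`-module `M`. It is the first map
of the characteristic sequence `0 → A[X] ⊗[A] M → A[X] ⊗[A] M → M → 0`. -/
noncomputable def polynomialCharMap : A[X] ⊗[A] M →ₗ[A[X]] A[X] ⊗[A] M :=
  (X : A[X]) • LinearMap.id - (Algebra.lsmul A A M (X : A[X])).baseChange A[X]

/-- The action map `p ⊗ m ↦ p • m`, the second map of the characteristic sequence. -/
noncomputable def polynomialActionMap : A[X] ⊗[A] M →ₗ[A[X]] M :=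
  (LinearMap.id : M →ₗ[A] M).liftBaseChange A[X]

variable {A M}

lemma polynomialCharMap_tmul (p : A[X]) (m : M) :
    polynomialCharMap A M (p ⊗ₜ m) = (X * p) ⊗ₜ m - p ⊗ₜ ((X : A[X]) • m) := by
  simp [polynomialCharMap, TensorProduct.smul_tmul']

lemma polynomialActionMap_tmul (p : A[X]) (m : M) :
    polynomialActionMap A M (p ⊗ₜ m) = p • m := by
  simp [polynomialActionMap]

lemma tensorCoeff_polynomialCharMap_succ (t : A[X] ⊗[A] M) (k : ℕ) :
    tensorCoeff A (polynomialCharMap A M t) (k + 1) =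
      tensorCoeff A t k - (X : A[X]) • tensorCoeff A t (k + 1) := by
  induction t with
  | zero => simp only [map_zero, Finsupp.zero_apply, smul_zero, sub_zero]
  | tmul p m =>
    rw [polynomialCharMap_tmul, map_sub, Finsupp.sub_apply, tensorCoeff_tmul, tensorCoeff_tmul,
      tensorCoeff_tmul, tensorCoeff_tmul, coeff_X_mul, smul_comm]
  | add s t hs ht => simp only [map_add, Finsupp.add_apply, hs, ht, smul_add]; abel

variable (A M)

lemma polynomialCharMap_injective : Function.Injective (polynomialCharMap A M) := by
  rw [injective_iff_map_eq_zero]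
  intro t ht
  by_contra hne
  have hsupp : (tensorCoeff A t).support.Nonempty := by
    rwa [Finsupp.support_nonempty_iff, (tensorCoeff A).map_ne_zero_iff]
  obtain ⟨d, hd, hmax⟩ := (tensorCoeff A t).support.exists_max_image id hsupp
  have htop : tensorCoeff A t (d + 1) = 0 :=
    Finsupp.notMem_support_iff.mp fun h ↦ (hmax _ h).not_gt d.lt_succ_self
  have hcoeff := tensorCoeff_polynomialCharMap_succ t d
  rw [ht, map_zero, Finsupp.zero_apply, htop, smul_zero, sub_zero] at hcoeff
  exact Finsupp.mem_support_iff.mp hd hcoeff.symm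

lemma polynomialActionMap_surjective : Function.Surjective (polynomialActionMap A M) :=
  fun m ↦ ⟨1 ⊗ₜ m, by rw [polynomialActionMap_tmul, one_smul]⟩

variable {M}

lemma tmul_sub_one_tmul_smul_mem_range_polynomialCharMap (p : A[X]) (m : M) :
    p ⊗ₜ m - 1 ⊗ₜ (p • m) ∈ LinearMap.range (polynomialCharMap A M) := by
  have hp : p ∈ Algebra.adjoin A {(X : A[X])} := by rw [adjoin_X]; exact Algebra.mem_top
  induction hp using Algebra.adjoin_induction generalizing m with
  | mem p hp =>
    obtain rfl := Set.mem_singleton_iff.mp hp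
    exact ⟨1 ⊗ₜ m, by rw [polynomialCharMap_tmul, mul_one]⟩
  | algebraMap a =>
    rw [algebraMap_smul, Algebra.algebraMap_eq_smul_one, smul_tmul, sub_self]
    exact zero_mem _
  | add p q _ _ hp hq =>
    rw [add_tmul, add_smul, tmul_add, add_sub_add_comm]
    exact add_mem (hp m) (hq m)
  | mul p q _ _ hp hq =>
    have hsplit : (p * q) ⊗ₜ[A] m - 1 ⊗ₜ ((p * q) • m) =
        p • (q ⊗ₜ[A] m - 1 ⊗ₜ (q • m)) + (p ⊗ₜ (q • m) - 1 ⊗ₜ (p • q • m)) := by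
      simp only [smul_sub, smul_tmul', smul_eq_mul, mul_one, mul_smul, sub_add_sub_cancel]
    rw [hsplit]
    exact add_mem (Submodule.smul_mem _ p (hq m)) (hp (q • m))

lemma sub_one_tmul_mem_range_polynomialCharMap (t : A[X] ⊗[A] M) :
    t - 1 ⊗ₜ polynomialActionMap A M t ∈ LinearMap.range (polynomialCharMap A M) := by
  induction t with
  | zero => simp only [map_zero, tmul_zero, sub_zero, zero_mem]
  | tmul p m =>
    rw [polynomialActionMap_tmul]
    exact tmul_sub_one_tmul_smul_mem_range_polynomialCharMap A p m
  | add s t hs ht =>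
    rw [map_add, tmul_add, add_sub_add_comm]
    exact add_mem hs ht

variable (M)

lemma polynomialActionMap_comp_polynomialCharMap :
    polynomialActionMap A M ∘ₗ polynomialCharMap A M = 0 := by
  ext m
  simp [polynomialCharMap_tmul, polynomialActionMap_tmul]

lemma exact_polynomialCharMap_polynomialActionMap :
    Function.Exact (polynomialCharMap A M) (polynomialActionMap A M) := by
  refine LinearMap.exact_of_comp_of_mem_range (polynomialActionMap_comp_polynomialCharMap A M) ?_
  intro t ht
  have h := sub_one_tmul_mem_range_polynomialCharMap A t
  rwa [ht, tmul_zero, sub_zero] at h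

end CharacteristicSequence

section GlobalDimension

lemma hasProjectiveDimensionLE_baseChange {A : Type u} {B : Type u'} [CommRing A] [CommRing B]
    [Algebra A B] [Module.Flat A B] [Small.{v} A] (n : ℕ) (M : ModuleCat.{v} A)
    (hM : HasProjectiveDimensionLE M n) :
    HasProjectiveDimensionLE (ModuleCat.of B (B ⊗[A] M)) n := by
  induction n generalizing M with
  | zero =>
    rw [← projective_iff_hasProjectiveDimensionLE_zero, ← IsProjective.iff_projective] at hM ⊢
    infer_instance
  | succ n ih =>
    have hS := M.shortExact_projectiveShortComplex
    let p := M.projectiveShortComplex.g.hom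
    have hp : Function.Surjective p := hS.moduleCat_surjective_g
    have hex : Function.Exact ((LinearMap.ker p).subtype.baseChange B) (p.baseChange B) :=
      lTensor_exact B p.exact_subtype_ker_map hp
    have hT := ModuleCat.shortComplex_shortExact
      (ModuleCat.shortComplexOfCompEqZero _ _ hex.linearMap_comp_eq_zero) hex
      (Module.Flat.lTensor_preserves_injective_linearMap _ (LinearMap.ker p).subtype_injective)
      (LinearMap.lTensor_surjective B hp)
    have hP : Projective (ModuleCat.of B (B ⊗[A] M.projectiveShortComplex.X₂)) :=
      (IsProjective.iff_projective _).mp inferInstance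
    exact (hT.hasProjectiveDimensionLT_X₃_iff n hP).mpr
      (ih _ ((hS.hasProjectiveDimensionLT_X₃_iff n inferInstance).mp hM))

/-- The ring `R` has global dimension at most `n`. Projective dimension is only tested on modules in
the universe `v`. -/
def HasGlobalDimensionLE (R : Type u) [Ring R] (n : ℕ) : Prop :=
  ∀ M : ModuleCat.{v} R, HasProjectiveDimensionLE M n

namespace HasGlobalDimensionLE

lemma of_isSemisimpleRing (R : Type u) [Ring R] [IsSemisimpleRing R] [Small.{v} R] :
    HasGlobalDimensionLE.{u, v} R 0 := fun M ↦ by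
  rw [← projective_iff_hasProjectiveDimensionLE_zero, ← IsProjective.iff_projective]
  exact Module.projective_of_isSemisimpleRing R M

variable {n : ℕ}

lemma hasInjectiveDimensionLE {R : Type u} [Ring R] [Small.{v} R]
    (hR : HasGlobalDimensionLE.{u, v} R n) (M : ModuleCat.{v} R) :
    HasInjectiveDimensionLE M n := by
  rw [HasInjectiveDimensionLE, hasInjectiveDimensionLT_iff]
  intro i hi N e
  have := hR N
  exact e.eq_zero_of_hasProjectiveDimensionLT (n + 1) hi

lemma of_ringEquiv {R : Type u} {S : Type u'} [Ring R] [Ring S] [Small.{v} R] [Small.{v} S]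
    (e : R ≃+* S) (hR : HasGlobalDimensionLE.{u, v} R n) : HasGlobalDimensionLE.{u', v} S n := by
  intro M
  have := RingHomInvPair.of_ringEquiv e
  have := RingHomInvPair.of_ringEquiv e.symm
  let _ : Module R M := Module.compHom M e.toRingHom
  let f : ModuleCat.of R M ≃ₛₗ[RingHomClass.toRingHom e] M :=
    { AddEquiv.refl M with map_smul' := fun _ _ ↦ rfl }
  have := hR (ModuleCat.of R M)
  exact ModuleCat.hasProjectiveDimensionLE_of_semiLinearEquiv e f n

lemma polynomial {A : Type u} [CommRing A] (hA : HasGlobalDimensionLE.{u, max u v} A n) :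
    HasGlobalDimensionLE.{u, max u v} A[X] (n + 1) := by
  intro M
  let _ : Module A M := Module.compHom M (algebraMap A A[X])
  have : IsScalarTower A A[X] M := .of_algebraMap_smul fun _ _ ↦ rfl
  have hex := exact_polynomialCharMap_polynomialActionMap A M
  have hS := ModuleCat.shortComplex_shortExact
    (ModuleCat.shortComplexOfCompEqZero _ _ hex.linearMap_comp_eq_zero) hex
    (polynomialCharMap_injective A M) (polynomialActionMap_surjective A M)
  have hP : HasProjectiveDimensionLE (ModuleCat.of A[X] (A[X] ⊗[A] M)) n :=
    hasProjectiveDimensionLE_baseChange n (ModuleCat.of A M) (hA _)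
  exact hS.hasProjectiveDimensionLT_X₃ (n + 1) hP
    (hasProjectiveDimensionLT_of_ge _ (n + 1) _ (n + 1).le_succ)

lemma mvPolynomial {A : Type u} [CommRing A] (hA : HasGlobalDimensionLE.{u, max u v} A n) (r : ℕ) :
    HasGlobalDimensionLE.{u, max u v} (MvPolynomial (Fin r) A) (n + r) := by
  induction r with
  | zero => exact hA.of_ringEquiv (MvPolynomial.isEmptyRingEquiv A (Fin 0)).symm
  | succ r ih =>
    exact (polynomial.{u, v} ih).of_ringEquiv (MvPolynomial.finSuccEquiv A r).symm.toRingEquiv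

lemma mvPolynomial_of_field (k : Type u) [Field k] (r : ℕ) :
    HasGlobalDimensionLE.{u, max u v} (MvPolynomial (Fin r) k) r := by
  simpa only [zero_add] using mvPolynomial.{u, v} (of_isSemisimpleRing k) r

end HasGlobalDimensionLE

end GlobalDimension

section PowTorsion

variable {R : Type u} [CommRing R] {J : Ideal R}
  {M : Type v} [AddCommGroup M] [Module R M] {N : Type v'} [AddCommGroup N] [Module R N]

variable (J M) in
/-- The `R`-module `M` is `J`-power-torsion: each element is annihilated by a power of `J`. -/
def IsPowTorsion : Prop :=
  ∀ x : M, ∃ n : ℕ, ∀ a ∈ J ^ n, a • x = 0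

namespace IsPowTorsion

lemma of_injective (hN : IsPowTorsion J N) (f : M →ₗ[R] N) (hf : Function.Injective f) :
    IsPowTorsion J M := by
  intro x
  obtain ⟨n, hn⟩ := hN (f x)
  exact ⟨n, fun a ha ↦ hf (by rw [map_smul, hn a ha, map_zero])⟩

lemma of_surjective (hM : IsPowTorsion J M) (f : M →ₗ[R] N) (hf : Function.Surjective f) :
    IsPowTorsion J N := by
  intro y
  obtain ⟨x, rfl⟩ := hf y
  obtain ⟨n, hn⟩ := hM x
  exact ⟨n, fun a ha ↦ by rw [← map_smul, hn a ha, map_zero]⟩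

lemma exists_pow_le_annihilator [Module.Finite R M] (hM : IsPowTorsion J M) :
    ∃ n : ℕ, J ^ n ≤ Module.annihilator R M := by
  choose f hf using hM
  obtain ⟨s, hs⟩ := Module.Finite.fg_top (R := R) (M := M)
  refine ⟨s.sup f, fun a ha ↦ ?_⟩
  rw [← Submodule.annihilator_top, ← hs, Submodule.mem_annihilator_span]
  exact fun x ↦ hf x a (Ideal.pow_le_pow_right (Finset.le_sup x.2) ha)

lemma apply_mem_primaryComponent (hM : IsPowTorsion J M) (f : M →ₗ[R] N) (x : M) :
    f x ∈ J.primaryComponent N := by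
  obtain ⟨n, hn⟩ := hM x
  refine (J.primaryComponent_mem N _).mpr ⟨n, (Submodule.mem_torsionBySet_iff _ _).mpr ?_⟩
  exact fun a ↦ by rw [← map_smul, hn a a.2, map_zero]

end IsPowTorsion

variable (J M) in
lemma isPowTorsion_primaryComponent : IsPowTorsion J (J.primaryComponent M) := by
  intro x
  obtain ⟨n, hn⟩ := (J.primaryComponent_mem M _).mp x.2
  exact ⟨n, fun a ha ↦ Subtype.ext ((Submodule.mem_torsionBySet_iff _ _).mp hn ⟨a, ha⟩)⟩

variable (J) in
lemma exists_pow_smul_top_inf_le_pow_smul [IsNoetherianRing R] [Module.Finite R M]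
    (P : Submodule R M) (n : ℕ) : ∃ m : ℕ, J ^ m • ⊤ ⊓ P ≤ J ^ n • P := by
  obtain ⟨k, hk⟩ := J.exists_pow_inf_eq_pow_smul P
  refine ⟨n + k, ?_⟩
  rw [hk (n + k) (Nat.le_add_left k n), Nat.add_sub_cancel]
  exact Submodule.smul_mono le_rfl inf_le_right

lemma exists_mem_torsionBySet_smul_eq (hM : Module.Baer R M) {I K : Ideal R} (g : K →ₗ[R] M)
    (hg : ∀ x : K, (x : R) ∈ I → g x = 0) :
    ∃ y ∈ Submodule.torsionBySet R M I, ∀ x : K, (x : R) • y = g x := by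
  let φ : K →ₗ[R] R ⧸ I := I.mkQ ∘ₗ K.subtype
  have hker : LinearMap.ker φ ≤ LinearMap.ker g :=
    fun x hx ↦ hg x ((Submodule.Quotient.mk_eq_zero I).mp hx)
  obtain ⟨h, hh⟩ := hM.extension_property ((LinearMap.ker φ).liftQ φ le_rfl)
    (LinearMap.ker_eq_bot.mp (Submodule.ker_liftQ_eq_bot _ _ _ le_rfl))
    ((LinearMap.ker φ).liftQ g hker)
  have hsmul (a : R) : a • h (I.mkQ 1) = h (I.mkQ a) := by
    rw [← map_smul, ← map_smul, smul_eq_mul, mul_one]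
  refine ⟨h (I.mkQ 1), (Submodule.mem_torsionBySet_iff _ _).mpr fun a ↦ ?_, fun x ↦ ?_⟩
  · rw [hsmul, Submodule.mkQ_apply, (Submodule.Quotient.mk_eq_zero I).mpr a.2, map_zero]
  · rw [hsmul]
    exact LinearMap.congr_fun hh (Submodule.Quotient.mk x)

variable (J) in
lemma baer_primaryComponent [IsNoetherianRing R] (hM : Module.Baer R M) :
    Module.Baer R (J.primaryComponent M) := by
  intro K g
  obtain ⟨n, hn⟩ := ((isPowTorsion_primaryComponent J M).of_injective (LinearMap.range g).subtype
    (LinearMap.range g).injective_subtype).exists_pow_le_annihilator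
  obtain ⟨m, hm⟩ := exists_pow_smul_top_inf_le_pow_smul J K n
  have hker : J ^ n • K ≤ (LinearMap.ker g).map K.subtype := by
    refine Submodule.smul_le.mpr fun a ha x hx ↦ ⟨a • ⟨x, hx⟩, ?_, rfl⟩
    rw [SetLike.mem_coe, LinearMap.mem_ker, map_smul]
    exact congrArg Subtype.val (Module.mem_annihilator.mp (hn ha) ⟨g ⟨x, hx⟩, ⟨x, hx⟩, rfl⟩)
  have hg (x : K) (hx : (x : R) ∈ J ^ m) : g x = 0 := by
    obtain ⟨y, hy, hyx⟩ := hker (hm ⟨by rwa [smul_eq_mul, Ideal.mul_top], x.2⟩)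
    rwa [← Subtype.ext hyx]
  obtain ⟨y, hy, hyg⟩ := exists_mem_torsionBySet_smul_eq hM ((J.primaryComponent M).subtype ∘ₗ g)
    fun x hx ↦ congrArg Subtype.val (hg x hx)
  refine ⟨LinearMap.toSpanSingleton R _ ⟨y, (J.primaryComponent_mem M y).mpr ⟨m, hy⟩⟩, ?_⟩
  exact fun x hx ↦ Subtype.ext (hyg ⟨x, hx⟩)

lemma IsPowTorsion.exists_injective_embedding [IsNoetherianRing R] [Small.{v} R]
    (hM : IsPowTorsion J M) :
    ∃ (E : ModuleCat.{v} R) (f : M →ₗ[R] E),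
      Module.Injective R E ∧ IsPowTorsion J E ∧ Function.Injective f := by
  obtain ⟨Q, hQ, f, hf⟩ := EnoughInjectives.presentation (ModuleCat.of R M)
  have hBaer : Module.Baer R Q := .of_injective (Module.injective_module_of_injective_object R Q)
  exact ⟨ModuleCat.of R (J.primaryComponent Q),
    f.hom.codRestrict _ (hM.apply_mem_primaryComponent f.hom),
    (baer_primaryComponent J hBaer).injective,
    isPowTorsion_primaryComponent J Q,
    (LinearMap.injective_codRestrict_iff _).mpr ((ModuleCat.mono_iff_injective f).mp hf)⟩

end PowTorsion

section Resolution

variable {R : Type u} [CommRing R]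

/-- There is an exact sequence `0 → N → I₀ → ⋯ → Iₙ → 0` in which each `Iⱼ` is injective and
`J`-power-torsion. The sequence is encoded as an `ℕ`-indexed complex that vanishes in degrees `> n`,
so that exactness at `Iₙ` is surjectivity of `Iₙ₋₁ → Iₙ`. -/
def HasInjectivePowTorsionResolution (J : Ideal R) (N : Type v) [AddCommGroup N] [Module R N]
    (n : ℕ) : Prop :=
  ∃ (I : ℕ → ModuleCat.{w} R) (f : N →ₗ[R] I 0) (d : ∀ m : ℕ, I m →ₗ[R] I (m + 1)),
    (∀ m ≤ n, Module.Injective R (I m) ∧ IsPowTorsion J (I m)) ∧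
    (∀ m, n < m → Subsingleton (I m)) ∧
    Function.Injective f ∧
    LinearMap.range f = LinearMap.ker (d 0) ∧
    (∀ m : ℕ, LinearMap.range (d m) = LinearMap.ker (d (m + 1)))

variable {J : Ideal R} {n : ℕ} {N : Type v} [AddCommGroup N] [Module R N]
  {N' : Type v'} [AddCommGroup N'] [Module R N']

namespace HasInjectivePowTorsionResolution

lemma of_linearEquiv (e : N ≃ₗ[R] N')
    (h : HasInjectivePowTorsionResolution.{u, v', w} J N' n) :
    HasInjectivePowTorsionResolution.{u, v, w} J N n := by
  obtain ⟨I, f, d, hI, hsub, hf, hexact₀, hexact⟩ := h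
  refine ⟨I, f ∘ₗ e.toLinearMap, d, hI, hsub, hf.comp e.injective, ?_, hexact⟩
  rw [LinearMap.range_comp_of_range_eq_top _ e.range, hexact₀]

lemma of_injective (hinj : Module.Injective R N) (hN : IsPowTorsion J N) :
    HasInjectivePowTorsionResolution.{u, v, v} J N 0 := by
  have : Subsingleton (ModuleCat.of R PUnit.{v + 1}) := inferInstanceAs (Subsingleton PUnit)
  refine ⟨fun | 0 => ModuleCat.of R N | _ + 1 => ModuleCat.of R PUnit, LinearMap.id, fun _ ↦ 0,
    ?_, ?_, Function.injective_id, ?_, fun _ ↦ ?_⟩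
  · intro m hm
    obtain rfl := Nat.le_zero.mp hm
    exact ⟨hinj, hN⟩
  · rintro (_ | m) hm
    · exact absurd hm (lt_irrefl 0)
    · exact this
  · rw [LinearMap.range_id, LinearMap.ker_zero]
  · exact Subsingleton.elim (α := Submodule R PUnit.{v + 1}) _ _

lemma succ {E : ModuleCat.{w} R} (hinj : Module.Injective R E) (hE : IsPowTorsion J E)
    (f : N →ₗ[R] E) (hf : Function.Injective f)
    (h : HasInjectivePowTorsionResolution.{u, w, w} J (E ⧸ LinearMap.range f) n) :
    HasInjectivePowTorsionResolution.{u, v, w} J N (n + 1) := by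
  obtain ⟨I, g, d, hI, hsub, hg, hexact₀, hexact⟩ := h
  refine ⟨fun | 0 => E | m + 1 => I m, f,
    fun | 0 => g ∘ₗ (LinearMap.range f).mkQ | m + 1 => d m, ?_, ?_, hf, ?_, ?_⟩
  · rintro (_ | m) hm
    · exact ⟨hinj, hE⟩
    · exact hI m (Nat.le_of_succ_le_succ hm)
  · rintro (_ | m) hm
    · exact absurd hm (Nat.not_lt_zero _)
    · exact hsub m (Nat.lt_of_succ_lt_succ hm)
  · change _ = LinearMap.ker (g ∘ₗ (LinearMap.range f).mkQ)
    rw [LinearMap.ker_comp_of_ker_eq_bot _ (LinearMap.ker_eq_bot.mpr hg), Submodule.ker_mkQ]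
  · rintro (_ | m)
    · change LinearMap.range (g ∘ₗ (LinearMap.range f).mkQ) = LinearMap.ker (d 0)
      rw [LinearMap.range_comp_of_range_eq_top _ (Submodule.range_mkQ _), hexact₀]
    · exact hexact m

end HasInjectivePowTorsionResolution

lemma hasInjectiveDimensionLE_quotient_range [Small.{v} R] {E : ModuleCat.{v} R}
    (hE : Module.Injective R E) (f : N →ₗ[R] E) (hf : Function.Injective f)
    (hN : HasInjectiveDimensionLE (ModuleCat.of R N) (n + 1)) :
    HasInjectiveDimensionLE (ModuleCat.of R (E ⧸ LinearMap.range f)) n := by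
  have hS := ModuleCat.shortComplex_shortExact
    (ModuleCat.shortComplexOfCompEqZero _ _ f.exact_map_mkQ_range.linearMap_comp_eq_zero)
    f.exact_map_mkQ_range hf (Submodule.mkQ_surjective _)
  exact (hS.hasInjectiveDimensionLT_X₃_iff n
    ((Module.injective_iff_injective_object R E).mp hE)).mpr hN

lemma IsPowTorsion.hasInjectivePowTorsionResolution [IsNoetherianRing R] [Small.{v} R]
    (hN : IsPowTorsion J N) (hn : HasInjectiveDimensionLE (ModuleCat.of R N) n) :
    HasInjectivePowTorsionResolution.{u, v, v} J N n := by
  induction n generalizing N with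
  | zero =>
    refine .of_injective ((Module.injective_iff_injective_object R N).mpr ?_) hN
    exact injective_iff_hasInjectiveDimensionLT_one.mpr hn
  | succ n ih =>
    obtain ⟨E, f, hinj, hE, hf⟩ := hN.exists_injective_embedding
    exact .succ hinj hE f hf (ih (hE.of_surjective _ (Submodule.mkQ_surjective _))
      (hasInjectiveDimensionLE_quotient_range hinj f hf hn))

theorem torsion_injective_resolution_of_length_r_general [IsNoetherianRing R]
    (hR : HasGlobalDimensionLE.{u, max u v w} R n) (hN : IsPowTorsion J N) :
    HasInjectivePowTorsionResolution.{u, v, max u v w} J N n := by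
  have hN' : IsPowTorsion J (ULift.{max u w} N) :=
    hN.of_injective ULift.moduleEquiv.toLinearMap ULift.moduleEquiv.injective
  exact .of_linearEquiv ULift.moduleEquiv.symm
    (hN'.hasInjectivePowTorsionResolution (hR.hasInjectiveDimensionLE _))

end Resolution

/-- Every `𝔪`-power-torsion `R`-module `N` admits an exact sequence
`0 → N → I_0 → I_1 → ⋯ → I_r → 0` in which each `I_j` is both injective and
`𝔪`-power-torsion; in particular every `𝔪`-power-torsion module has injective dimension
at most `r`.  (We encode the finite resolution by an `ℕ`-indexed complex which vanishes in
degrees `> r`; exactness at the last nonzero spot then encodes surjectivity.) -/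
theorem torsion_injective_resolution_of_length_r
    (r : ℕ) (N : Type) [AddCommGroup N] [Module (PolyR r) N] (hN : IsMTorsion r N) :
    ∃ (I : ℕ → ModuleCat (PolyR r))
      (f : N →ₗ[PolyR r] I 0)
      (d : ∀ n : ℕ, I n →ₗ[PolyR r] I (n + 1)),
      (∀ n ≤ r, Module.Injective (PolyR r) (I n) ∧ IsMTorsion r (I n)) ∧
      (∀ n, r < n → Subsingleton (I n)) ∧
      Function.Injective f ∧
      LinearMap.range f = LinearMap.ker (d 0) ∧
      (∀ n : ℕ, LinearMap.range (d n) = LinearMap.ker (d (n + 1))) :=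
  torsion_injective_resolution_of_length_r_general
    (HasGlobalDimensionLE.mvPolynomial_of_field ℚ r) hN
end
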